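/- arXiv:1412.3436 — 7 statements merged into one kernel-verified Lean document; each statement's English description precedes it below -/
import Mathlib

section
/- Let k ≥ 1, let c be a point of ℝ² and v : Fin (k+1) → ℝ² points with v i ≠ c for all i, and suppose the fan with center c and nodes v 0, …, v k is unfolded, i.e. ∑_{i=0}^{k−1} angle(v i − c, v (i+1) − c) = angle(v 0 − c, v k − c). Then for every D ∈ ℕ and all points qc, q 0, …, q k in EuclideanSpace ℝ (Fin D) satisfying ‖q i − qc‖ = ‖v i − c‖ for all i ≤ k, ‖q (i+1) − q i‖ = ‖v (i+1) − v i‖ for all i < k, and ‖q k − q 0‖ = ‖v k − v 0‖, one has ‖q i − q j‖ = ‖v i − v j‖ for all i, j ≤ k. (Every nonconvex Grünbaum polygon is universally rigid.) -/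
open InnerProductGeometry

/-!
View every node from the center, so that it becomes a nonzero vector. The lengths of the edges of
the polygon determine the angles between consecutive nodes and the angle between the first and the
last node, so unfoldedness transfers from `v` to any realization `q`. By the triangle inequality
for angles (`angle_le_sum_Ico`), an unfolded fan has no slack anywhere: the angle between *any* two
nodes is the sum of the consecutive angles between them (`angle_eq_sum_Ico`). Hence all angles
of `q` agree with those of `v`, and the law of cosines gives the distances.
-/

section Angle

variable {V W : Type*} [NormedAddCommGroup V] [InnerProductSpace ℝ V]
  [NormedAddCommGroup W] [InnerProductSpace ℝ W]

/-- The side-side-side criterion for angles. -/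
lemma angle_eq_of_norm_eq {x y : V} {x' y' : W} (hx : ‖x'‖ = ‖x‖) (hy : ‖y'‖ = ‖y‖)
    (hxy : ‖y' - x'‖ = ‖y - x‖) : angle x' y' = angle x y := by
  unfold angle
  rw [real_inner_eq_norm_mul_self_add_norm_mul_self_sub_norm_sub_mul_self_div_two,
    real_inner_eq_norm_mul_self_add_norm_mul_self_sub_norm_sub_mul_self_div_two x,
    norm_sub_rev x', norm_sub_rev x, hx, hy, hxy]

/-- The side-angle-side criterion for the opposite side. -/
lemma norm_sub_eq_of_angle_eq {x y : V} {x' y' : W} (hx : ‖x'‖ = ‖x‖) (hy : ‖y'‖ = ‖y‖)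
    (hxy : angle x' y' = angle x y) : ‖x' - y'‖ = ‖x - y‖ := by
  refine (mul_self_inj (norm_nonneg _) (norm_nonneg _)).1 ?_
  rw [norm_sub_sq_eq_norm_sq_add_norm_sq_sub_two_mul_norm_mul_norm_mul_cos_angle,
    norm_sub_sq_eq_norm_sq_add_norm_sq_sub_two_mul_norm_mul_norm_mul_cos_angle x, hx, hy, hxy]

lemma angle_le_sum_Ico {x : ℕ → V} (hx : ∀ n, x n ≠ 0) {m n : ℕ} (hmn : m ≤ n) :
    angle (x m) (x n) ≤ ∑ i ∈ Finset.Ico m n, angle (x i) (x (i + 1)) := by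
  induction n, hmn using Nat.le_induction with
  | base => simp [angle_self (hx m)]
  | succ n hmn ih =>
    rw [Finset.sum_Ico_succ_top hmn]
    linarith [angle_le_angle_add_angle (x m) (x n) (x (n + 1))]

/-- In an unfolded fan every subfan is unfolded. -/
lemma angle_eq_sum_Ico {x : ℕ → V} (hx : ∀ n, x n ≠ 0) {k : ℕ}
    (h : ∑ i ∈ Finset.range k, angle (x i) (x (i + 1)) = angle (x 0) (x k))
    {m n : ℕ} (hmn : m ≤ n) (hnk : n ≤ k) :
    angle (x m) (x n) = ∑ i ∈ Finset.Ico m n, angle (x i) (x (i + 1)) := by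
  rw [Finset.range_eq_Ico, ← Finset.sum_Ico_consecutive _ (Nat.zero_le n) hnk,
    ← Finset.sum_Ico_consecutive _ (Nat.zero_le m) hmn] at h
  linarith [angle_le_sum_Ico hx (Nat.zero_le m), angle_le_sum_Ico hx hmn, angle_le_sum_Ico hx hnk,
    angle_le_angle_add_angle (x 0) (x m) (x k), angle_le_angle_add_angle (x m) (x n) (x k)]

/-- The version of `angle_eq_sum_Ico` for a fan whose nodes are indexed by `Fin (k + 1)`; the
indices are read modulo `k + 1`, which has no effect on the nodes in the sum. -/
lemma angle_eq_sum_Ico_of_fin {k : ℕ} {x : Fin (k + 1) → V} (hx : ∀ i, x i ≠ 0)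
    (h : ∑ i : Fin k, angle (x i.castSucc) (x i.succ) = angle (x 0) (x (Fin.last k)))
    {i j : Fin (k + 1)} (hij : i ≤ j) :
    angle (x i) (x j) =
      ∑ n ∈ Finset.Ico (i : ℕ) j, angle (x (Fin.ofNat (k + 1) n)) (x (Fin.ofNat (k + 1) (n + 1))) := by
  have hval (l : Fin (k + 1)) : Fin.ofNat (k + 1) (l : ℕ) = l := Fin.ofNat_val_eq_self l
  have key := angle_eq_sum_Ico (x := fun n => x (Fin.ofNat (k + 1) n)) (fun n => hx _) (k := k)
    (m := i) (n := j) ?_ hij (Nat.lt_succ_iff.1 j.2)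
  · simpa only [hval] using key
  · have hlast : Fin.ofNat (k + 1) k = Fin.last k := hval (Fin.last k)
    have hzero : Fin.ofNat (k + 1) 0 = 0 := hval 0
    rw [hlast, hzero, ← h, ← Fin.sum_univ_eq_sum_range
      (fun n => angle (x (Fin.ofNat (k + 1) n)) (x (Fin.ofNat (k + 1) (n + 1))))]
    refine Finset.sum_congr rfl fun l _ => ?_
    have h1 : Fin.ofNat (k + 1) (l : ℕ) = l.castSucc := hval l.castSucc
    have h2 : Fin.ofNat (k + 1) ((l : ℕ) + 1) = l.succ := hval l.succ
    rw [h1, h2]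

end Angle

/-- Every nonconvex Grünbaum polygon is universally rigid: if a planar fan with
center `c` and nodes `v 0, …, v k` is unfolded, then any configuration in any
dimension realizing the lengths of all fan edges together with the closing edge
`v 0 – v k` realizes all pairwise distances among the nodes. -/
theorem nonconvex_grunbaum_polygon_universally_rigid
    (k : ℕ) (hk : 1 ≤ k) (c : EuclideanSpace ℝ (Fin 2))
    (v : Fin (k + 1) → EuclideanSpace ℝ (Fin 2))
    (hv : ∀ i, v i ≠ c)
    (hunfolded : ∑ i : Fin k, angle (v i.castSucc - c) (v i.succ - c)
      = angle (v 0 - c) (v (Fin.last k) - c)) :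
    ∀ (D : ℕ) (qc : EuclideanSpace ℝ (Fin D))
      (q : Fin (k + 1) → EuclideanSpace ℝ (Fin D)),
      (∀ i, ‖q i - qc‖ = ‖v i - c‖) →
      (∀ i : Fin k, ‖q i.succ - q i.castSucc‖ = ‖v i.succ - v i.castSucc‖) →
      ‖q (Fin.last k) - q 0‖ = ‖v (Fin.last k) - v 0‖ →
      ∀ i j, ‖q i - q j‖ = ‖v i - v j‖ := by
  intro D qc q hspoke hedge hclose
  have hv0 (i) : v i - c ≠ 0 := sub_ne_zero.2 (hv i)
  have hq0 (i) : q i - qc ≠ 0 := by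
    rw [← norm_ne_zero_iff, hspoke]; exact norm_ne_zero_iff.2 (hv0 i)
  have hangle (i : Fin k) : angle (q i.castSucc - qc) (q i.succ - qc)
      = angle (v i.castSucc - c) (v i.succ - c) :=
    angle_eq_of_norm_eq (hspoke _) (hspoke _) (by simpa using hedge i)
  have hends : angle (q 0 - qc) (q (Fin.last k) - qc) = angle (v 0 - c) (v (Fin.last k) - c) :=
    angle_eq_of_norm_eq (hspoke _) (hspoke _) (by simpa using hclose)
  have hq : ∑ i : Fin k, angle (q i.castSucc - qc) (q i.succ - qc)
      = angle (q 0 - qc) (q (Fin.last k) - qc) := by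
    rw [hends, ← hunfolded]
    exact Finset.sum_congr rfl fun i _ => hangle i
  have main {i j : Fin (k + 1)} (hij : i ≤ j) : ‖q i - q j‖ = ‖v i - v j‖ := by
    suffices angle (q i - qc) (q j - qc) = angle (v i - c) (v j - c) by
      simpa using norm_sub_eq_of_angle_eq (hspoke i) (hspoke j) this
    rw [angle_eq_sum_Ico_of_fin (x := fun i => q i - qc) hq0 hq hij,
      angle_eq_sum_Ico_of_fin (x := fun i => v i - c) hv0 hunfolded hij]
    refine Finset.sum_congr rfl fun n hn => ?_
    have hnk : n < k := by have := (Finset.mem_Ico.1 hn).2; omega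
    have h1 : Fin.ofNat (k + 1) n = Fin.castSucc ⟨n, hnk⟩ :=
      Fin.ofNat_val_eq_self (Fin.castSucc ⟨n, hnk⟩)
    have h2 : Fin.ofNat (k + 1) (n + 1) = Fin.succ ⟨n, hnk⟩ :=
      Fin.ofNat_val_eq_self (Fin.succ ⟨n, hnk⟩)
    rw [h1, h2]
    exact hangle _
  intro i j
  rcases le_total i j with hij | hij
  · exact main hij
  · rw [norm_sub_rev, norm_sub_rev (v i)]
    exact main hij
end

section
/- Let n ≥ 4 and let p : Fin n → EuclideanSpace ℝ (Fin 2) be injective with affineSpan ℝ (Set.range p) = ⊤. Then there exists a finite set E of unordered pairs of elements of Fin n (E : Finset (Sym2 (Fin n)) with no pair diagonal) with E.card = 2n − 2 such that the framework (E, p) is universally rigid. -/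
/-!
The edge set is a wheel. The hub `o` is a node with smallest second coordinate, so every other
node is seen from `o` in a direction whose argument `t` lies in `[0, π]`; the rim is the cycle
through the other nodes in order of increasing `t`. The angle at `o` between two nodes is then the
difference of their arguments, so the angles spanned by the consecutive rim edges add up to the
angle spanned by the closing rim edge.

If `q` has the same edge lengths, the law of cosines gives it the same angle at `o` over every rim
edge. Since angles satisfy the triangle inequality, and the closing edge attains equality along the
whole rim, equality holds along every arc of the rim (`angle_rigid`). Hence all the angles at `o`
agree, and the law of cosines turns this into equality of all the distances.

The wheel has at most `2n - 2` edges, and more edges only make a framework more rigid, so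
it may be completed to exactly `2n - 2` edges.
-/

open InnerProductGeometry in
/-- Spherical rigidity of a rim whose closing edge is as long as all the others together: by the
triangle inequality for angles, every partial angle is forced. -/
lemma angle_rigid {V : Type*} [NormedAddCommGroup V] [InnerProductSpace ℝ V]
    (u : ℕ → V) (t : ℕ → ℝ) (a b : ℕ)
    (hstep : ∀ k, a ≤ k → k < b → angle (u k) (u (k + 1)) = t (k + 1) - t k)
    (hclose : angle (u a) (u b) = t b - t a) :
    ∀ i j, a ≤ i → i < j → j ≤ b → angle (u i) (u j) = t j - t i := by
  have upper : ∀ i j, a ≤ i → i < j → j ≤ b → angle (u i) (u j) ≤ t j - t i := by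
    intro i j hi hij
    induction j, hij using Nat.le_induction with
    | base => intro h; exact (hstep i hi h).le
    | succ j hij ih =>
      intro h
      have h1 := ih (by lia)
      have h2 := hstep j (by lia) (by lia)
      have h3 := angle_le_angle_add_angle (u i) (u j) (u (j + 1))
      linarith
  intro i j hi hij hj
  refine le_antisymm (upper i j hi hij hj) ?_
  -- The detour `a, i, j, b` is at least as long as `t b - t a`.
  have h1 : t j - t a ≤ angle (u a) (u j) := by
    rcases hj.eq_or_lt with rfl | hjb
    · exact hclose.ge
    · have := upper j b (by lia) hjb le_rfl
      have := angle_le_angle_add_angle (u a) (u j) (u b)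
      linarith
  rcases hi.eq_or_lt with rfl | hai
  · exact h1
  · have := upper a i le_rfl hai (by lia)
    have := angle_le_angle_add_angle (u a) (u i) (u j)
    linarith

open InnerProductGeometry in
lemma norm_sub_eq_iff_angle_eq {V W : Type*} [NormedAddCommGroup V] [InnerProductSpace ℝ V]
    [NormedAddCommGroup W] [InnerProductSpace ℝ W] {x y : V} {x' y' : W}
    (hx : ‖x'‖ = ‖x‖) (hy : ‖y'‖ = ‖y‖) (hx0 : x ≠ 0) (hy0 : y ≠ 0) :
    ‖x' - y'‖ = ‖x - y‖ ↔ angle x' y' = angle x y := by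
  have h1 := norm_sub_sq_eq_norm_sq_add_norm_sq_sub_two_mul_norm_mul_norm_mul_cos_angle x y
  have h2 := norm_sub_sq_eq_norm_sq_add_norm_sq_sub_two_mul_norm_mul_norm_mul_cos_angle x' y'
  rw [hx, hy] at h2
  constructor
  · intro h
    rw [h] at h2
    have hpos : 0 < ‖x‖ * ‖y‖ := mul_pos (norm_pos_iff.2 hx0) (norm_pos_iff.2 hy0)
    refine Real.injOn_cos ⟨angle_nonneg _ _, angle_le_pi _ _⟩ ⟨angle_nonneg _ _, angle_le_pi _ _⟩ ?_
    refine mul_left_cancel₀ hpos.ne' ?_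
    linarith
  · intro h
    rw [h] at h2
    exact (mul_self_inj (norm_nonneg _) (norm_nonneg _)).1 (h2.trans h1.symm)

/-- The polar angle of a vector of the plane, in `(-π, π]`. -/
noncomputable def planeArg (v : EuclideanSpace ℝ (Fin 2)) : ℝ := Complex.arg ⟨v 0, v 1⟩

lemma norm_complex_eq (v : EuclideanSpace ℝ (Fin 2)) : ‖(⟨v 0, v 1⟩ : ℂ)‖ = ‖v‖ := by
  rw [EuclideanSpace.norm_eq, Complex.norm_eq_sqrt_sq_add_sq]
  simp [Fin.sum_univ_two]

open InnerProductGeometry in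
lemma angle_eq_planeArg_sub {v w : EuclideanSpace ℝ (Fin 2)} (hv : v ≠ 0) (hw : w ≠ 0)
    (hv1 : 0 ≤ v 1) (hle : planeArg v ≤ planeArg w) :
    angle v w = planeArg w - planeArg v := by
  have h0 : 0 ≤ planeArg v := Complex.arg_nonneg_iff.2 hv1
  have hpi : planeArg w ≤ Real.pi := Complex.arg_le_pi _
  have hcos (x : EuclideanSpace ℝ (Fin 2)) : ‖x‖ * Real.cos (planeArg x) = x 0 := by
    simpa [planeArg, norm_complex_eq] using Complex.norm_mul_cos_arg ⟨x 0, x 1⟩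
  have hsin (x : EuclideanSpace ℝ (Fin 2)) : ‖x‖ * Real.sin (planeArg x) = x 1 := by
    simpa [planeArg, norm_complex_eq] using Complex.norm_mul_sin_arg ⟨x 0, x 1⟩
  have hpos : 0 < ‖v‖ * ‖w‖ := mul_pos (norm_pos_iff.2 hv) (norm_pos_iff.2 hw)
  have hinner : inner ℝ v w = ‖v‖ * ‖w‖ * Real.cos (planeArg w - planeArg v) := by
    rw [PiLp.inner_apply, Fin.sum_univ_two, Real.cos_sub]
    simp only [RCLike.inner_apply, conj_trivial]
    rw [← hcos v, ← hcos w, ← hsin v, ← hsin w]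
    ring
  rw [angle, hinner, mul_div_cancel_left₀ _ hpos.ne', Real.arccos_cos] <;> linarith

/-- The wheel with hub `P 0` and rim `P 1, …, P (n - 1)`. -/
def wheel {α : Type*} [DecidableEq α] (n : ℕ) (P : ℕ → α) : Finset (Sym2 α) :=
  (Finset.Ico 1 n).image (fun k => s(P 0, P k)) ∪
    ((Finset.Ico 1 (n - 1)).image (fun k => s(P k, P (k + 1))) ∪ {s(P 1, P (n - 1))})

lemma card_wheel_le {α : Type*} [DecidableEq α] {n : ℕ} (hn : 2 ≤ n) (P : ℕ → α) :
    (wheel n P).card ≤ 2 * n - 2 := by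
  have h1 : ((Finset.Ico 1 n).image (fun k => s(P 0, P k))).card ≤ n - 1 := by
    simpa using Finset.card_image_le (s := Finset.Ico 1 n) (f := fun k => s(P 0, P k))
  have h2 : ((Finset.Ico 1 (n - 1)).image (fun k => s(P k, P (k + 1)))).card ≤ n - 1 - 1 := by
    simpa using Finset.card_image_le (s := Finset.Ico 1 (n - 1)) (f := fun k => s(P k, P (k + 1)))
  have h3 := Finset.card_union_le ((Finset.Ico 1 n).image (fun k => s(P 0, P k)))
    ((Finset.Ico 1 (n - 1)).image (fun k => s(P k, P (k + 1))) ∪ {s(P 1, P (n - 1))})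
  have h4 := Finset.card_union_le ((Finset.Ico 1 (n - 1)).image (fun k => s(P k, P (k + 1))))
    {s(P 1, P (n - 1))}
  rw [Finset.card_singleton] at h4
  unfold wheel
  lia

lemma wheel_not_isDiag {α : Type*} [DecidableEq α] {n : ℕ} (hn : 3 ≤ n) (P : ℕ → α)
    (hP : ∀ i j, i < n → j < n → P i = P j → i = j) : ∀ e ∈ wheel n P, ¬ e.IsDiag := by
  intro e he
  simp only [wheel, Finset.mem_union, Finset.mem_image, Finset.mem_Ico,
    Finset.mem_singleton] at he
  rcases he with ⟨k, hk, rfl⟩ | ⟨k, hk, rfl⟩ | rfl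
  · intro h
    have := hP _ _ (by lia) (by lia) (Sym2.mk_isDiag_iff.1 h)
    lia
  · intro h
    have := hP _ _ (by lia) (by lia) (Sym2.mk_isDiag_iff.1 h)
    lia
  · intro h
    have := hP _ _ (by lia) (by lia) (Sym2.mk_isDiag_iff.1 h)
    lia

open InnerProductGeometry in
/-- The wheel is universally rigid if the rim lies above the hub, sorted by polar angle. -/
lemma wheel_rigid {α : Type*} [DecidableEq α] {n : ℕ} (hn : 3 ≤ n) (P : ℕ → α)
    (p : α → EuclideanSpace ℝ (Fin 2))
    (hne : ∀ k, 1 ≤ k → k < n → p (P k) - p (P 0) ≠ 0)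
    (hup : ∀ k, 1 ≤ k → k < n → 0 ≤ (p (P k) - p (P 0)) 1)
    (hmono : ∀ i j, 1 ≤ i → i ≤ j → j < n →
      planeArg (p (P i) - p (P 0)) ≤ planeArg (p (P j) - p (P 0)))
    {W : Type*} [NormedAddCommGroup W] [InnerProductSpace ℝ W] (q : α → W)
    (hq : ∀ i j, s(i, j) ∈ wheel n P → ‖q i - q j‖ = ‖p i - p j‖) :
    ∀ i j, i < j → j < n → ‖q (P i) - q (P j)‖ = ‖p (P i) - p (P j)‖ := by
  have spoke : ∀ k, 1 ≤ k → k < n → ‖q (P k) - q (P 0)‖ = ‖p (P k) - p (P 0)‖ := by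
    intro k h1 h2
    rw [norm_sub_rev, norm_sub_rev (p _)]
    refine hq _ _ (Finset.mem_union_left _ (Finset.mem_image.2 ⟨k, ?_, rfl⟩))
    simp [h1, h2]
  have key : ∀ i j, 1 ≤ i → i < j → j < n →
      (‖q (P i) - q (P j)‖ = ‖p (P i) - p (P j)‖ ↔
        angle (q (P i) - q (P 0)) (q (P j) - q (P 0)) =
          planeArg (p (P j) - p (P 0)) - planeArg (p (P i) - p (P 0))) := by
    intro i j h1 h2 h3
    rw [← angle_eq_planeArg_sub (hne i h1 (by lia)) (hne j (by lia) h3) (hup i h1 (by lia))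
        (hmono i j h1 h2.le h3),
      ← norm_sub_eq_iff_angle_eq (spoke i h1 (by lia)) (spoke j (by lia) h3)
        (hne i h1 (by lia)) (hne j (by lia) h3)]
    simp only [sub_sub_sub_cancel_right]
  intro i j hij hj
  rcases Nat.eq_zero_or_pos i with rfl | hi
  · rw [norm_sub_rev, norm_sub_rev (p _)]
    exact spoke j hij hj
  refine (key i j hi hij hj).2 ?_
  refine angle_rigid (fun k => q (P k) - q (P 0)) (fun k => planeArg (p (P k) - p (P 0)))
    1 (n - 1) ?_ ?_ i j hi hij (by lia)
  · intro k h1 h2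
    refine (key k (k + 1) h1 (by lia) (by lia)).1 (hq _ _ ?_)
    refine Finset.mem_union_right _ (Finset.mem_union_left _ (Finset.mem_image.2 ⟨k, ?_, rfl⟩))
    simp [h1, h2]
  · refine (key 1 (n - 1) le_rfl (by lia) (by lia)).1 (hq _ _ ?_)
    exact Finset.mem_union_right _ (Finset.mem_union_right _ (Finset.mem_singleton_self _))

/-- Some node sees all the others in the closed upper half plane; list it first and the others in
order of polar angle around it. -/
lemma exists_radial_order {n : ℕ} (hn : 0 < n) (p : Fin n → EuclideanSpace ℝ (Fin 2)) :
    ∃ σ : Equiv.Perm (Fin n), (∀ k, 0 ≤ (p k - p (σ ⟨0, hn⟩)) 1) ∧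
      ∀ i j : Fin n, 1 ≤ i.val → i ≤ j →
        planeArg (p (σ i) - p (σ ⟨0, hn⟩)) ≤ planeArg (p (σ j) - p (σ ⟨0, hn⟩)) := by
  have : Nonempty (Fin n) := ⟨⟨0, hn⟩⟩
  obtain ⟨o, ho⟩ := Finite.exists_min (fun k => p k 1)
  have hup : ∀ k, 0 ≤ (p k - p o) 1 := fun k => by simpa using ho k
  -- The value `-1` is below every polar angle that occurs, so sorting puts the hub first.
  let t : Fin n → ℝ := fun k => if k = o then -1 else planeArg (p k - p o)
  have ht : ∀ k, k ≠ o → 0 ≤ t k := fun k hk => by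
    simp only [t, if_neg hk]
    exact Complex.arg_nonneg_iff.2 (hup k)
  have hs : Monotone (t ∘ Tuple.sort t) := Tuple.monotone_sort t
  have h0 : Tuple.sort t ⟨0, hn⟩ = o := by
    by_contra hne
    have h1 := ht _ hne
    have h2 := hs (show (⟨0, hn⟩ : Fin n) ≤ (Tuple.sort t).symm o from Nat.zero_le _)
    have h3 : t o = -1 := by simp [t]
    simp only [Function.comp, Equiv.apply_symm_apply] at h2
    linarith
  refine ⟨Tuple.sort t, by rwa [h0], ?_⟩
  intro i j hi hij
  have hno : ∀ k : Fin n, 1 ≤ k.val → Tuple.sort t k ≠ o := by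
    intro k hk h
    have := congrArg Fin.val ((Tuple.sort t).injective (h.trans h0.symm))
    simp at this
    lia
  have := hs hij
  simp only [Function.comp, t, if_neg (hno i hi), if_neg (hno j (hi.trans hij))] at this
  rwa [h0]

/-- The paper's 2D construction: for any `n ≥ 4` given distinct nodes affinely
spanning the plane, there is an edge set with the minimum number `2n - 2` of
edges making the framework universally rigid. -/
theorem exists_minimal_universally_rigid_framework_dim2
    (n : ℕ) (hn : 4 ≤ n) (p : Fin n → EuclideanSpace ℝ (Fin 2))
    (hinj : Function.Injective p)
    (hspan : affineSpan ℝ (Set.range p) = ⊤) :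
    ∃ E : Finset (Sym2 (Fin n)),
      (∀ e ∈ E, ¬ e.IsDiag) ∧
      E.card = 2 * n - 2 ∧
      ∀ (D : ℕ) (q : Fin n → EuclideanSpace ℝ (Fin D)),
        (∀ i j : Fin n, s(i, j) ∈ E → ‖q i - q j‖ = ‖p i - p j‖) →
        ∀ i j : Fin n, ‖q i - q j‖ = ‖p i - p j‖ := by
  have hn0 : 0 < n := by lia
  obtain ⟨σ, hup, hmono⟩ := exists_radial_order hn0 p
  -- The nodes in radial order, indexed by `ℕ`; the value at indices `≥ n` is irrelevant.
  let P : ℕ → Fin n := fun k => if h : k < n then σ ⟨k, h⟩ else σ ⟨0, hn0⟩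
  have hPlt : ∀ k (h : k < n), P k = σ ⟨k, h⟩ := fun k h => dif_pos h
  have hPinj : ∀ i j, i < n → j < n → P i = P j → i = j := by
    intro i j hi hj h
    rw [hPlt i hi, hPlt j hj] at h
    exact congrArg Fin.val (σ.injective h)
  have hPsurj : ∀ x : Fin n, ∃ k, k < n ∧ P k = x := fun x =>
    ⟨(σ.symm x).val, (σ.symm x).isLt, by rw [hPlt _ (σ.symm x).isLt]; simp⟩
  have hcard : 2 * n - 2 ≤ (Finset.univ.filter fun e : Sym2 (Fin n) => ¬ e.IsDiag).card := by
    have h := Sym2.card_subtype_not_diag (α := Fin n)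
    rw [Fintype.card_subtype, Fintype.card_fin] at h
    rw [h, Nat.choose_two_right, Nat.le_div_iff_mul_le two_pos]
    obtain ⟨m, rfl⟩ := Nat.exists_eq_add_of_le hn
    have e1 : 2 * (4 + m) - 2 = 6 + 2 * m := by lia
    have e2 : 4 + m - 1 = 3 + m := by lia
    rw [e1, e2]
    nlinarith
  obtain ⟨E, hE, hEd, hEc⟩ := Finset.exists_subsuperset_card_eq
    (s := wheel n P) (t := Finset.univ.filter fun e : Sym2 (Fin n) => ¬ e.IsDiag)
    (fun e he => by simpa using wheel_not_isDiag (by lia) P hPinj e he)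
    (card_wheel_le (by lia) P) hcard
  refine ⟨E, fun e he => by simpa using hEd he, hEc, ?_⟩
  intro D q hq
  have hrigid := wheel_rigid (by lia : 3 ≤ n) P p
    (fun k h1 h2 h => by
      have := hPinj _ _ h2 hn0 (hinj (sub_eq_zero.1 h))
      lia)
    (fun k h1 h2 => by rw [hPlt 0 hn0]; exact hup _)
    (fun i j h1 h2 h3 => by
      rw [hPlt 0 hn0, hPlt i (by lia), hPlt j h3]
      exact hmono _ _ h1 h2)
    q (fun i j h => hq i j (hE h))
  intro i j
  obtain ⟨a, ha, rfl⟩ := hPsurj i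
  obtain ⟨b, hb, rfl⟩ := hPsurj j
  rcases lt_trichotomy a b with h | rfl | h
  · exact hrigid a b h hb
  · simp
  · rw [norm_sub_rev, norm_sub_rev (p _)]
    exact hrigid b a h ha
end

section
/- Let n ≥ 5 and let p : Fin n → EuclideanSpace ℝ (Fin 3) be injective with affineSpan ℝ (Set.range p) = ⊤. Then there exists a finite set E of unordered pairs of elements of Fin n (E : Finset (Sym2 (Fin n)) with no pair diagonal) with E.card = 3n − 5 such that the framework (E, p) is universally rigid. -/
/-!
Fix two nodes `a ≠ b` and join both of them to every node. Write `v i` for the component of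
`p i - p a` orthogonal to `p b - p a`; it lives in a plane, so `v i = ρ i • (cos θ i, sin θ i)` with a
signed radius `ρ i` and `θ i ∈ [0, π)`. The remaining edges run cyclically through the nodes with
`ρ i ≠ 0`, in order of increasing `θ`. This uses at most `1 + 2 (n - 2) + (n - 2) = 3 n - 5` edges,
and adding further edges preserves universal rigidity.

Given an equivalent configuration `q`, the distances to `a` and `b` fix the components of
`q i - q a` along `q b - q a` and the lengths of the orthogonal components `w i`, and a further edge
`{i, j}` fixes `⟪w i, w j⟫`. Dividing by the signed radius `ρ i` (this may replace `w i` by `-w i`)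
gives unit vectors whose consecutive angles are `θ (k + 1) - θ k`, and for which the angle between the
last and the first is the sum of the others, as that sum is less than `π`. So equality holds in the
triangle inequality for angles, which forces every angle to be a difference of `θ`s
(`inner_eq_cos_of_tight`). Hence all inner products of the `q i - q a`, and so all distances, are
those of `p`. Nodes on the line through `a` and `b` have `ρ i = 0` and cause no difficulty.
-/

open InnerProductGeometry

/-- Unit vectors in any inner product space whose consecutive angles and closing angle agree with
those of points on an arc of length less than `π` have all their angles as on that arc. -/
lemma inner_eq_cos_of_tight {V : Type*} [NormedAddCommGroup V] [InnerProductSpace ℝ V]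
    (x : ℕ → V) (t : ℕ → ℝ) (m : ℕ)
    (hx : ∀ k < m, ‖x k‖ = 1)
    (ht : ∀ k l, k ≤ l → l < m → t k ≤ t l)
    (ht0 : ∀ k, 0 ≤ t k) (htpi : ∀ k, t k < Real.pi)
    (hstep : ∀ k, k + 1 < m → inner ℝ (x k) (x (k + 1)) = Real.cos (t (k + 1) - t k))
    (hclose : 0 < m → inner ℝ (x 0) (x (m - 1)) = Real.cos (t (m - 1) - t 0)) :
    ∀ i j, i ≤ j → j < m → inner ℝ (x i) (x j) = Real.cos (t j - t i) := by
  have hangle : ∀ i j, i ≤ j → j < m → inner ℝ (x i) (x j) = Real.cos (t j - t i) →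
      angle (x i) (x j) = t j - t i := by
    intro i j hij hj h
    rw [angle, h, hx i (by omega), hx j hj, one_mul, div_one,
      Real.arccos_cos (by linarith [ht i j hij hj]) (by linarith [ht0 i, htpi j])]
  have hle : ∀ i j, i ≤ j → j < m → angle (x i) (x j) ≤ t j - t i := by
    intro i j hij
    induction j, hij using Nat.le_induction with
    | base =>
      intro hi
      rw [angle_self (by rw [← norm_ne_zero_iff, hx i hi]; exact one_ne_zero), sub_self]
    | succ j hij ih =>
      intro hj
      have h1 := angle_le_angle_add_angle (x i) (x j) (x (j + 1))
      have h2 := hangle j (j + 1) (by omega) hj (hstep j hj)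
      linarith [ih (by omega)]
  intro i j hij hj
  have h0 := hangle 0 (m - 1) (by omega) (by omega) (hclose (by omega))
  have h1 := angle_le_angle_add_angle (x 0) (x i) (x (m - 1))
  have h2 := angle_le_angle_add_angle (x i) (x j) (x (m - 1))
  have h3 := hle 0 i (by omega) (by omega)
  have h4 := hle j (m - 1) (by omega) (by omega)
  have h5 : angle (x i) (x j) = t j - t i := le_antisymm (hle i j hij hj) (by linarith)
  rw [← h5, cos_angle, hx i (by omega), hx j hj, one_mul, div_one]

/-- The rigidity lemma in signed polar form: if the Gram matrix of `v` agrees with that of the planar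
vectors `ρ i • (cos θ i, sin θ i)` on the diagonal and along the cycle `σ` through the nonzero
vectors in order of `θ`, then it agrees everywhere. -/
lemma inner_eq_of_cycle {ι V : Type*} [NormedAddCommGroup V] [InnerProductSpace ℝ V]
    (v : ι → V) (ρ θ : ι → ℝ) (σ : ℕ → ι) (m : ℕ)
    (hθ0 : ∀ i, 0 ≤ θ i) (hθpi : ∀ i, θ i < Real.pi)
    (hσ : ∀ k < m, ρ (σ k) ≠ 0) (hsurj : ∀ i, ρ i ≠ 0 → ∃ k < m, σ k = i)
    (hmono : ∀ k l, k ≤ l → l < m → θ (σ k) ≤ θ (σ l))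
    (hdiag : ∀ i, inner ℝ (v i) (v i) = ρ i * ρ i)
    (hcyc : ∀ k < m, inner ℝ (v (σ k)) (v (σ ((k + 1) % m))) =
      ρ (σ k) * ρ (σ ((k + 1) % m)) * Real.cos (θ (σ ((k + 1) % m)) - θ (σ k))) :
    ∀ i j, inner ℝ (v i) (v j) = ρ i * ρ j * Real.cos (θ j - θ i) := by
  have hzero : ∀ i, ρ i = 0 → v i = 0 := by
    intro i hi
    rw [← inner_self_eq_zero (𝕜 := ℝ), hdiag, hi, zero_mul]
  have hscale : ∀ i j (c : ℝ), ρ i ≠ 0 → ρ j ≠ 0 →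
      (inner ℝ ((ρ i)⁻¹ • v i) ((ρ j)⁻¹ • v j) = c ↔ inner ℝ (v i) (v j) = ρ i * ρ j * c) := by
    intro i j c hi hj
    rw [real_inner_smul_left, real_inner_smul_right]
    constructor
    · rintro rfl
      field_simp
    · intro h
      rw [h]
      field_simp
  have key := inner_eq_cos_of_tight (fun k => (ρ (σ k))⁻¹ • v (σ k)) (fun k => θ (σ k)) m
    (by
      intro k hk
      rw [← sq_eq_sq₀ (norm_nonneg _) zero_le_one, ← real_inner_self_eq_norm_sq, one_pow,
        hscale _ _ _ (hσ k hk) (hσ k hk), hdiag, mul_one])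
    hmono (fun k => hθ0 _) (fun k => hθpi _)
    (by
      intro k hk
      have h := hcyc k (by omega)
      rw [Nat.mod_eq_of_lt hk] at h
      exact (hscale _ _ _ (hσ k (by omega)) (hσ _ hk)).2 h)
    (by
      intro hm
      have h := hcyc (m - 1) (by omega)
      rw [Nat.sub_add_cancel hm, Nat.mod_self] at h
      refine (hscale _ _ _ (hσ 0 hm) (hσ _ (by omega))).2 ?_
      rw [real_inner_comm, h, ← Real.cos_neg, neg_sub]
      ring)
  intro i j
  by_cases hi : ρ i = 0
  · rw [hzero i hi, hi, inner_zero_left]; ring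
  by_cases hj : ρ j = 0
  · rw [hzero j hj, hj, inner_zero_right]; ring
  obtain ⟨k, hk, rfl⟩ := hsurj i hi
  obtain ⟨l, hl, rfl⟩ := hsurj j hj
  rcases le_total k l with hkl | hkl
  · exact (hscale _ _ _ hi hj).1 (key k l hkl hl)
  · rw [real_inner_comm, (hscale _ _ _ hj hi).1 (key l k hkl hk), ← Real.cos_neg, neg_sub]
    ring

/-- The component of `x` orthogonal to `u`. -/
noncomputable def perp {V : Type*} [NormedAddCommGroup V] [InnerProductSpace ℝ V] (u x : V) : V :=
  x - (inner ℝ x u / inner ℝ u u) • u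

lemma inner_perp {V : Type*} [NormedAddCommGroup V] [InnerProductSpace ℝ V] {u : V} (hu : u ≠ 0)
    (x y : V) : inner ℝ (perp u x) (perp u y) =
      inner ℝ x y - inner ℝ x u * inner ℝ y u / inner ℝ u u := by
  have h : inner ℝ u u ≠ 0 := inner_self_ne_zero.2 hu
  rw [perp, perp, inner_sub_left, inner_sub_right, inner_sub_right, real_inner_smul_left,
    real_inner_smul_right, real_inner_smul_right, real_inner_smul_left, real_inner_comm y u]
  field_simp
  ring

/-- Polar coordinates with a signed radius and an angle in `[0, π)`. -/
lemma exists_signed_polar (x y : ℝ) : ∃ r t : ℝ, 0 ≤ t ∧ t < Real.pi ∧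
    x = r * Real.cos t ∧ y = r * Real.sin t := by
  have hc : ‖(⟨x, y⟩ : ℂ)‖ * Real.cos (Complex.arg ⟨x, y⟩) = x := Complex.norm_mul_cos_arg ⟨x, y⟩
  have hs : ‖(⟨x, y⟩ : ℂ)‖ * Real.sin (Complex.arg ⟨x, y⟩) = y := Complex.norm_mul_sin_arg ⟨x, y⟩
  have h1 := Complex.neg_pi_lt_arg ⟨x, y⟩
  have h2 := Complex.arg_le_pi ⟨x, y⟩
  rcases lt_or_ge (Complex.arg ⟨x, y⟩) 0 with h | h
  · refine ⟨-‖(⟨x, y⟩ : ℂ)‖, Complex.arg ⟨x, y⟩ + Real.pi, by linarith, by linarith, ?_, ?_⟩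
    · rw [Real.cos_add_pi, neg_mul_neg, hc]
    · rw [Real.sin_add_pi, neg_mul_neg, hs]
  · rcases h2.lt_or_eq with h2 | h2
    · exact ⟨_, _, h, h2, hc.symm, hs.symm⟩
    · refine ⟨x, 0, le_rfl, Real.pi_pos, by simp, ?_⟩
      rw [← hs, h2]
      simp

/-- The plane orthogonal to `u` in space carries signed polar coordinates, here pulled back along
`perp u`. -/
lemma exists_polar_perp {u : EuclideanSpace ℝ (Fin 3)} (hu : u ≠ 0) :
    ∃ r t : EuclideanSpace ℝ (Fin 3) → ℝ, (∀ x, 0 ≤ t x) ∧ (∀ x, t x < Real.pi) ∧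
      ∀ x y, inner ℝ (perp u x) (perp u y) = r x * r y * Real.cos (t y - t x) := by
  have : Fact (Module.finrank ℝ (EuclideanSpace ℝ (Fin 3)) = 2 + 1) := ⟨by simp⟩
  have hK : Module.finrank ℝ (ℝ ∙ u)ᗮ = 2 := Submodule.finrank_orthogonal_span_singleton hu
  let B : OrthonormalBasis (Fin 2) ℝ (ℝ ∙ u)ᗮ :=
    (stdOrthonormalBasis ℝ (ℝ ∙ u)ᗮ).reindex (finCongr hK)
  have hmem : ∀ x, perp u x ∈ (ℝ ∙ u)ᗮ := by
    intro x
    rw [Submodule.mem_orthogonal_singleton_iff_inner_left, perp, inner_sub_left,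
      real_inner_smul_left, div_mul_cancel₀ _ (inner_self_ne_zero.2 hu), sub_self]
  let c : Fin 2 → EuclideanSpace ℝ (Fin 3) → ℝ := fun k x => inner ℝ (B k) ⟨perp u x, hmem x⟩
  choose r t h0 hpi hc hs using fun x => exists_signed_polar (c 0 x) (c 1 x)
  refine ⟨r, t, h0, hpi, fun x y => ?_⟩
  have h := B.sum_inner_mul_inner ⟨perp u x, hmem x⟩ ⟨perp u y, hmem y⟩
  rw [Fin.sum_univ_two, real_inner_comm (B 0), real_inner_comm (B 1)] at h
  refine h.symm.trans ?_
  change c 0 x * c 0 y + c 1 x * c 1 y = _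
  rw [hc x, hc y, hs x, hs y, Real.cos_sub]
  ring

/-- Enumerates `S` in increasing order of `f`; the values of `σ` from `S.card` on are junk. -/
lemma exists_sorted_enum {ι : Type*} [Nonempty ι] (S : Finset ι) (f : ι → ℝ) :
    ∃ σ : ℕ → ι, (∀ k < S.card, σ k ∈ S) ∧ (∀ i ∈ S, ∃ k < S.card, σ k = i) ∧
      ∀ k l, k ≤ l → l < S.card → f (σ k) ≤ f (σ l) := by
  classical
  let e : Fin S.card → ι := fun k => (S.equivFin.symm k : ι)
  let τ := Tuple.sort (f ∘ e)
  have hτ : Monotone ((f ∘ e) ∘ τ) := Tuple.monotone_sort _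
  refine ⟨fun k => if h : k < S.card then e (τ ⟨k, h⟩) else Classical.arbitrary ι, ?_, ?_, ?_⟩
  · intro k hk
    simp only [hk, dite_true]
    exact (S.equivFin.symm _).2
  · intro i hi
    refine ⟨τ.symm (S.equivFin ⟨i, hi⟩), Fin.is_lt _, ?_⟩
    simp [e]
  · intro k l hkl hl
    have hk : k < S.card := by omega
    simp only [hk, hl, dite_true]
    exact hτ (show (⟨k, hk⟩ : Fin S.card) ≤ ⟨l, hl⟩ from hkl)

/-- A set of at most `3 n - 5` pairs, possibly containing diagonal ones, that forces all
distances. -/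
lemma exists_small_rigid {n : ℕ} (hn : 5 ≤ n) (p : Fin n → EuclideanSpace ℝ (Fin 3))
    (hinj : Function.Injective p) :
    ∃ E : Finset (Sym2 (Fin n)), E.card ≤ 3 * n - 5 ∧
      ∀ (D : ℕ) (q : Fin n → EuclideanSpace ℝ (Fin D)),
        (∀ i j : Fin n, s(i, j) ∈ E → ‖q i - q j‖ = ‖p i - p j‖) →
        ∀ i j : Fin n, ‖q i - q j‖ = ‖p i - p j‖ := by
  classical
  let a : Fin n := ⟨0, by omega⟩
  let b : Fin n := ⟨1, by omega⟩
  have hab : a ≠ b := by simp [a, b]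
  have : Nonempty (Fin n) := ⟨a⟩
  have hu : p b - p a ≠ 0 := sub_ne_zero.2 fun h => hab (hinj h).symm
  obtain ⟨r, t, ht0, htpi, hpolar⟩ := exists_polar_perp hu
  let ρ : Fin n → ℝ := fun i => r (p i - p a)
  let θ : Fin n → ℝ := fun i => t (p i - p a)
  have hP : ∀ i j, inner ℝ (perp (p b - p a) (p i - p a)) (perp (p b - p a) (p j - p a)) =
      ρ i * ρ j * Real.cos (θ j - θ i) := fun i j => hpolar _ _
  have hdiagP : ∀ i, inner ℝ (perp (p b - p a) (p i - p a)) (perp (p b - p a) (p i - p a)) =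
      ρ i * ρ i := fun i => by rw [hP, sub_self, Real.cos_zero, mul_one]
  have hρa : ρ a = 0 := by
    have h := hdiagP a
    rw [inner_perp hu] at h
    simpa using h.symm
  have hρb : ρ b = 0 := by
    have h := hdiagP b
    rw [inner_perp hu, mul_div_cancel_right₀ _ (inner_self_ne_zero.2 hu), sub_self] at h
    simpa using h.symm
  let C : Finset (Fin n) := {i | i ≠ a ∧ i ≠ b}
  let S : Finset (Fin n) := {i | ρ i ≠ 0}
  have hSC : S ⊆ C := by
    intro i hi
    simp only [S, C, Finset.mem_filter, Finset.mem_univ, true_and] at hi ⊢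
    exact ⟨fun h => hi (h ▸ hρa), fun h => hi (h ▸ hρb)⟩
  have hC : C.card = n - 2 := by
    have h : C = Finset.univ \ {a, b} := by
      ext i
      simp [C]
    rw [h, Finset.card_sdiff_of_subset (Finset.subset_univ _), Finset.card_pair hab]
    simp
  have hS : S.card ≤ n - 2 := hC ▸ Finset.card_le_card hSC
  obtain ⟨σ, hσS, hσsurj, hσmono⟩ := exists_sorted_enum S θ
  let E : Finset (Sym2 (Fin n)) := insert s(a, b) (C.image (fun i => s(a, i)) ∪
    C.image (fun i => s(b, i)) ∪
    (Finset.range S.card).image fun k => s(σ k, σ ((k + 1) % S.card)))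
  refine ⟨E, ?_, ?_⟩
  · have h1 : E.card ≤ _ := Finset.card_insert_le _ _
    have h2 := Finset.card_union_le (C.image (fun i => s(a, i)) ∪ C.image (fun i => s(b, i)))
      ((Finset.range S.card).image fun k => s(σ k, σ ((k + 1) % S.card)))
    have h3 := Finset.card_union_le (C.image (fun i => s(a, i))) (C.image (fun i => s(b, i)))
    have h4 : (C.image (fun i => s(a, i))).card ≤ _ := Finset.card_image_le
    have h5 : (C.image (fun i => s(b, i))).card ≤ _ := Finset.card_image_le
    have h6 : ((Finset.range S.card).image fun k => s(σ k, σ ((k + 1) % S.card))).card ≤ _ :=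
      Finset.card_image_le
    rw [Finset.card_range] at h6
    omega
  intro D q hq
  have hqa : ∀ i, ‖q i - q a‖ = ‖p i - p a‖ := by
    intro i
    by_cases hia : i = a
    · simp [hia]
    by_cases hib : i = b
    · subst hib
      refine hq _ _ ?_
      rw [Sym2.eq_swap]
      exact Finset.mem_insert_self _ _
    · refine hq _ _ ?_
      simp only [E, C, Finset.mem_insert, Finset.mem_union, Finset.mem_image, Finset.mem_filter,
        Finset.mem_univ, true_and]
      exact Or.inr (Or.inl (Or.inl ⟨i, ⟨hia, hib⟩, Sym2.eq_swap⟩))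
  have hqb : ∀ i, ‖q i - q b‖ = ‖p i - p b‖ := by
    intro i
    by_cases hia : i = a
    · rw [hia, norm_sub_rev, hqa, norm_sub_rev]
    by_cases hib : i = b
    · simp [hib]
    · refine hq _ _ ?_
      simp only [E, C, Finset.mem_insert, Finset.mem_union, Finset.mem_image, Finset.mem_filter,
        Finset.mem_univ, true_and]
      exact Or.inr (Or.inl (Or.inr ⟨i, ⟨hia, hib⟩, Sym2.eq_swap⟩))
  -- With all distances to `a` known, a distance and an inner product based at `a` are equivalent data.
  have hiff : ∀ i j, inner ℝ (q i - q a) (q j - q a) = inner ℝ (p i - p a) (p j - p a) ↔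
      ‖q i - q j‖ = ‖p i - p j‖ := by
    intro i j
    have h1 := norm_sub_sq_real (q i - q a) (q j - q a)
    have h2 := norm_sub_sq_real (p i - p a) (p j - p a)
    rw [sub_sub_sub_cancel_right, hqa, hqa] at h1
    rw [sub_sub_sub_cancel_right] at h2
    rw [← sq_eq_sq₀ (norm_nonneg _) (norm_nonneg _)]
    constructor <;> intro h <;> linarith
  have hu' : q b - q a ≠ 0 := by
    rw [← norm_ne_zero_iff, hqa, norm_ne_zero_iff]
    exact hu
  have hgram : ∀ i j,
      inner ℝ (perp (q b - q a) (q i - q a)) (perp (q b - q a) (q j - q a)) =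
        ρ i * ρ j * Real.cos (θ j - θ i) ↔ ‖q i - q j‖ = ‖p i - p j‖ := by
    intro i j
    rw [← hP, inner_perp hu, inner_perp hu', (hiff i b).2 (hqb i), (hiff j b).2 (hqb j),
      (hiff b b).2 (hqb b), sub_left_inj, hiff]
  intro i j
  refine (hgram i j).1 (inner_eq_of_cycle (fun i => perp (q b - q a) (q i - q a)) ρ θ σ S.card
    (fun _ => ht0 _) (fun _ => htpi _) (fun k hk => ?_) (fun i hi => ?_) hσmono (fun i => ?_)
    (fun k hk => ?_) i j)
  · exact (Finset.mem_filter.1 (hσS k hk)).2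
  · exact hσsurj i (Finset.mem_filter.2 ⟨Finset.mem_univ _, hi⟩)
  · have h := (hgram i i).2 (by simp)
    rwa [sub_self, Real.cos_zero, mul_one] at h
  · refine (hgram _ _).2 (hq _ _ ?_)
    exact Finset.mem_insert_of_mem (Finset.mem_union_right _
      (Finset.mem_image_of_mem _ (Finset.mem_range.2 hk)))

/-- The paper's 3D construction: for any `n ≥ 5` given distinct nodes affinely
spanning space, there is an edge set with the minimum number `3n - 5` of
edges making the framework universally rigid. -/
theorem exists_minimal_universally_rigid_framework_dim3
    (n : ℕ) (hn : 5 ≤ n) (p : Fin n → EuclideanSpace ℝ (Fin 3))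
    (hinj : Function.Injective p)
    (hspan : affineSpan ℝ (Set.range p) = ⊤) :
    ∃ E : Finset (Sym2 (Fin n)),
      (∀ e ∈ E, ¬ e.IsDiag) ∧
      E.card = 3 * n - 5 ∧
      ∀ (D : ℕ) (q : Fin n → EuclideanSpace ℝ (Fin D)),
        (∀ i j : Fin n, s(i, j) ∈ E → ‖q i - q j‖ = ‖p i - p j‖) →
        ∀ i j : Fin n, ‖q i - q j‖ = ‖p i - p j‖ := by
  classical
  obtain ⟨E, hE, hrigid⟩ := exists_small_rigid hn p hinj
  let N : Finset (Sym2 (Fin n)) := {e | ¬ e.IsDiag}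
  have hN : 3 * n - 5 ≤ N.card := by
    have h : N.card = n.choose 2 := by
      rw [← Fintype.card_subtype, Sym2.card_subtype_not_diag, Fintype.card_fin]
    rw [h, Nat.choose_two_right, Nat.le_div_iff_mul_le two_pos]
    obtain ⟨k, rfl⟩ := Nat.exists_eq_add_of_le hn
    rw [show 3 * (5 + k) - 5 = 10 + 3 * k by omega, show 5 + k - 1 = 4 + k by omega]
    nlinarith
  -- Diagonal pairs impose no condition, so they are dropped before adding edges up to `3 n - 5`.
  obtain ⟨F, hEF, hFN, hF⟩ := Finset.exists_subsuperset_card_eq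
    (s := E.filter fun e => ¬ e.IsDiag) (t := N) (Finset.filter_subset_filter _ (Finset.subset_univ E))
    ((Finset.card_filter_le _ _).trans hE) hN
  refine ⟨F, fun e he => (Finset.mem_filter.1 (hFN he)).2, hF, fun D q hq => hrigid D q ?_⟩
  intro i j hij
  by_cases h : i = j
  · simp [h]
  · exact hq i j (hEF (Finset.mem_filter.2 ⟨hij, by simpa using h⟩))
end

section
/- Let x, y, z be nonzero vectors in a real inner product space with angle(x, z) < π and angle(x, z) = angle(x, y) + angle(y, z). Then there exist nonnegative reals a, b such that ‖y‖⁻¹ • y = a • (‖x‖⁻¹ • x) + b • (‖z‖⁻¹ • z). (Equality in the spherical triangle inequality forces the middle direction to lie on the geodesic arc between the outer directions; this is the uniqueness mechanism in the unfolded-fan argument.) -/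
open InnerProductGeometry Real

/-- Equality in the spherical triangle inequality (with non-antipodal outer
directions) forces the middle direction to lie on the geodesic arc between the
outer directions: the unit vector of `y` is a nonnegative combination of the
unit vectors of `x` and `z`. -/
theorem angle_triangle_equality_middle_on_arc
    {V : Type*} [NormedAddCommGroup V] [InnerProductSpace ℝ V]
    (x y z : V) (hx : x ≠ 0) (hy : y ≠ 0) (hz : z ≠ 0)
    (hlt : angle x z < π)
    (heq : angle x z = angle x y + angle y z) :
    ∃ a b : ℝ, 0 ≤ a ∧ 0 ≤ b ∧
      ‖y‖⁻¹ • y = a • (‖x‖⁻¹ • x) + b • (‖z‖⁻¹ • z) := by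
  -- Mathlib's equality case of the angle triangle inequality: since `angle x z ≠ π`,
  -- `y` lies in the convex cone spanned by `x` and `z`.
  obtain hpi | hmem := (angle_eq_angle_add_angle_iff hy).mp heq
  · exact absurd hpi hlt.ne
  · obtain ⟨kx, kz, h⟩ := Submodule.mem_span_pair.mp hmem
    have hx' : ‖x‖ ≠ 0 := norm_ne_zero_iff.mpr hx
    have hz' : ‖z‖ ≠ 0 := norm_ne_zero_iff.mpr hz
    -- Rescale `y = kx • x + kz • z` to unit vectors.
    refine ⟨‖y‖⁻¹ * kx * ‖x‖, ‖y‖⁻¹ * kz * ‖z‖, by positivity, by positivity, ?_⟩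
    have h' : y = (kx : ℝ) • x + (kz : ℝ) • z := h.symm
    rw [smul_smul, smul_smul, mul_inv_cancel_right₀ hx', mul_inv_cancel_right₀ hz',
      mul_smul, mul_smul, ← smul_add, ← h']
end

section
/- Let k ≥ 1, c ∈ ℝ², v : Fin k → ℝ² with v i ≠ c for all i, and suppose there is a nonzero linear functional f : ℝ² →ₗ[ℝ] ℝ with f (v i − c) ≥ 0 for all i (all nodes lie in a closed half-plane whose boundary line passes through c). Then there exists a permutation σ of Fin k such that ∑_{i=0}^{k−2} angle(v (σ i) − c, v (σ (i+1)) − c) = angle(v (σ 0) − c, v (σ (k−1)) − c). (If the center is a boundary point of the convex hull, the remaining nodes can be ordered angularly so that the fan is unfolded.) -/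
/-!
Let `e` be a nonzero vector in the kernel of `f`. On the closed half-plane `0 ≤ f` the polar angle
`angle e x` of a nonzero `x` has cosine proportional to `⟪e, x⟫` and sine proportional to `f x`,
the sign of the sine being where the half-plane hypothesis enters. The subtraction formula for the
cosine then gives `angle x y = |angle e x - angle e y|` for all nonzero `x`, `y` in the half-plane
(`angle_eq_sub_of_halfplane`). Ordering the nodes by increasing polar angle makes the sum of
consecutive angles telescope to the difference of the extreme polar angles, which is the angle
between the extreme nodes.
-/

open InnerProductGeometry

/-- The vector `(f e₁, -f e₀)`, which is `f` as a vector rotated by a quarter turn; it spans the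
kernel of `f` when `f ≠ 0`. -/
noncomputable def boundaryDir (f : EuclideanSpace ℝ (Fin 2) →ₗ[ℝ] ℝ) : EuclideanSpace ℝ (Fin 2) :=
  !₂[f (EuclideanSpace.single 1 1), -f (EuclideanSpace.single 0 1)]

lemma apply_eq_coords (f : EuclideanSpace ℝ (Fin 2) →ₗ[ℝ] ℝ) (x : EuclideanSpace ℝ (Fin 2)) :
    f x = x 0 * f (EuclideanSpace.single 0 1) + x 1 * f (EuclideanSpace.single 1 1) := by
  have h : x = x 0 • EuclideanSpace.single 0 (1 : ℝ) + x 1 • EuclideanSpace.single 1 (1 : ℝ) := by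
    ext i
    fin_cases i <;> simp
  conv_lhs => rw [h]
  simp

lemma boundaryDir_ne_zero {f : EuclideanSpace ℝ (Fin 2) →ₗ[ℝ] ℝ} (hf : f ≠ 0) :
    boundaryDir f ≠ 0 := by
  intro h
  apply hf
  have h0 := congrArg (fun z : EuclideanSpace ℝ (Fin 2) => z 0) h
  have h1 := congrArg (fun z : EuclideanSpace ℝ (Fin 2) => z 1) h
  simp [boundaryDir] at h0 h1
  ext x
  rw [apply_eq_coords, h0, h1]
  simp

/-- The polarised Pythagorean identity in the orthogonal coordinates `⟪boundaryDir f, ·⟫` and `f`,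
both of which scale lengths by `‖boundaryDir f‖`. -/
lemma norm_sq_mul_inner (f : EuclideanSpace ℝ (Fin 2) →ₗ[ℝ] ℝ) (x y : EuclideanSpace ℝ (Fin 2)) :
    ‖boundaryDir f‖ ^ 2 * inner ℝ x y
      = inner ℝ (boundaryDir f) x * inner ℝ (boundaryDir f) y + f x * f y := by
  rw [apply_eq_coords f x, apply_eq_coords f y, ← real_inner_self_eq_norm_sq]
  simp only [boundaryDir, PiLp.inner_apply, Fin.sum_univ_two, RCLike.inner_apply, conj_trivial]
  simp
  ring

lemma sin_angle_boundaryDir (f : EuclideanSpace ℝ (Fin 2) →ₗ[ℝ] ℝ)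
    {x : EuclideanSpace ℝ (Fin 2)} (hx : 0 ≤ f x) :
    Real.sin (angle (boundaryDir f) x) * (‖boundaryDir f‖ * ‖x‖) = f x := by
  have h := norm_sq_mul_inner f x x
  rw [sin_angle_mul_norm_mul_norm, real_inner_self_eq_norm_sq (boundaryDir f), h]
  rw [show ∀ a b : ℝ, a * a + b * b - a * a = b * b by intros; ring]
  exact Real.sqrt_mul_self hx

/-- In a closed half-plane, unsigned angles are differences of polar angles measured from the
boundary direction. -/
lemma angle_eq_sub_of_halfplane {f : EuclideanSpace ℝ (Fin 2) →ₗ[ℝ] ℝ} (hf : f ≠ 0)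
    {x y : EuclideanSpace ℝ (Fin 2)} (hx0 : x ≠ 0) (hy0 : y ≠ 0) (hx : 0 ≤ f x) (hy : 0 ≤ f y)
    (hxy : angle (boundaryDir f) x ≤ angle (boundaryDir f) y) :
    angle x y = angle (boundaryDir f) y - angle (boundaryDir f) x := by
  apply Real.injOn_cos ⟨angle_nonneg _ _, angle_le_pi _ _⟩
    ⟨sub_nonneg.2 hxy, by linarith [angle_le_pi (boundaryDir f) y, angle_nonneg (boundaryDir f) x]⟩
  have he : 0 < ‖boundaryDir f‖ := norm_pos_iff.2 (boundaryDir_ne_zero hf)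
  have hx' : 0 < ‖x‖ := norm_pos_iff.2 hx0
  have hy' : 0 < ‖y‖ := norm_pos_iff.2 hy0
  have h := norm_sq_mul_inner f x y
  rw [← sin_angle_boundaryDir f hx, ← sin_angle_boundaryDir f hy,
    ← cos_angle_mul_norm_mul_norm x y, ← cos_angle_mul_norm_mul_norm (boundaryDir f) x,
    ← cos_angle_mul_norm_mul_norm (boundaryDir f) y] at h
  rw [Real.cos_sub]
  have hpos : ‖boundaryDir f‖ ^ 2 * (‖x‖ * ‖y‖) ≠ 0 := by positivity
  apply mul_right_cancel₀ hpos
  linear_combination h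

lemma sum_succ_sub_castSucc (n : ℕ) (t : Fin (n + 1) → ℝ) :
    ∑ i : Fin n, (t i.succ - t i.castSucc) = t (Fin.last n) - t 0 := by
  rw [Finset.sum_sub_distrib]
  have h := Fin.sum_univ_succ t
  rw [Fin.sum_univ_castSucc] at h
  linarith

/-- If the center `c` is a boundary point of the convex hull (all nodes lie in
a closed half-plane whose boundary line passes through `c`), then the nodes can
be ordered angularly so that the resulting fan is unfolded: the consecutive
angles at `c` sum to the angle between the extreme nodes at `c`. -/
theorem exists_unfolded_ordering_of_halfplane
    (k : ℕ) (hk : 1 ≤ k) (c : EuclideanSpace ℝ (Fin 2))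
    (v : Fin k → EuclideanSpace ℝ (Fin 2)) (hv : ∀ i, v i ≠ c)
    (f : EuclideanSpace ℝ (Fin 2) →ₗ[ℝ] ℝ) (hf : f ≠ 0)
    (hhalf : ∀ i, 0 ≤ f (v i - c)) :
    ∃ σ : Equiv.Perm (Fin k),
      ∑ i : Fin (k - 1),
          angle (v (σ ⟨i.1, by have := i.2; omega⟩) - c)
            (v (σ ⟨i.1 + 1, by have := i.2; omega⟩) - c)
        = angle (v (σ ⟨0, by omega⟩) - c) (v (σ ⟨k - 1, by omega⟩) - c) := by
  obtain ⟨n, rfl⟩ : ∃ n, k = n + 1 := ⟨k - 1, by omega⟩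
  let θ : Fin (n + 1) → ℝ := fun i => angle (boundaryDir f) (v i - c)
  have hmono : Monotone (θ ∘ Tuple.sort θ) := Tuple.monotone_sort θ
  have hang : ∀ i j : Fin (n + 1), i ≤ j →
      angle (v (Tuple.sort θ i) - c) (v (Tuple.sort θ j) - c)
        = (θ ∘ Tuple.sort θ) j - (θ ∘ Tuple.sort θ) i := fun i j hij =>
    angle_eq_sub_of_halfplane hf (sub_ne_zero.2 (hv _)) (sub_ne_zero.2 (hv _))
      (hhalf _) (hhalf _) (hmono hij)
  refine ⟨Tuple.sort θ, ?_⟩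
  calc
    _ = ∑ i : Fin n, ((θ ∘ Tuple.sort θ) i.succ - (θ ∘ Tuple.sort θ) i.castSucc) :=
      Finset.sum_congr rfl fun i _ => hang i.castSucc i.succ i.castSucc_lt_succ.le
    _ = (θ ∘ Tuple.sort θ) (Fin.last n) - (θ ∘ Tuple.sort θ) 0 := sum_succ_sub_castSucc n _
    _ = _ := (hang 0 (Fin.last n) (Fin.zero_le _)).symm
end

section
/- Let d, n ∈ ℕ, let p : Fin n → EuclideanSpace ℝ (Fin d) satisfy affineSpan ℝ (Set.range p) = ⊤, and let E : Finset (Sym2 (Fin n)) be a set of e = E.card unordered pairs of distinct indices. Let ρ : (Fin n → EuclideanSpace ℝ (Fin d)) →ₗ[ℝ] (E → ℝ) be the rigidity map sending a velocity field q to the function assigning to each edge {i, j} ∈ E the value ⟪p i − p j, q i − q j⟫. Define the number of flexes m := finrank ℝ (LinearMap.ker ρ) − d(d+1)/2 and the number of selfstresses s := e − finrank ℝ (LinearMap.range ρ). Then, as integers, d·n − d(d+1)/2 − e = m − s, and moreover m ≥ 0 and s ≥ 0. (Maxwell's rule, equation (1) of the paper.) -/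
open scoped RealInnerProductSpace

/-!
The equation is rank–nullity for `ρ`, and `s ≥ 0` holds because the range of `ρ` lies in a space of
dimension `E.card`. The inequality `m ≥ 0` asks for `d(d+1)/2` independent elements of `ker ρ`:
the rigid velocities `x ↦ w + A x` with `A` skew-symmetric. They lie in the kernel because
`⟪x, A x⟫ = 0`, and one that vanishes at all points `p k` vanishes on their affine span, which is
the whole space, so `w = 0` and `A = 0`. The pairs `(w, A)` are encoded as functions on
`Sym2 (Fin d)`, a type with `d(d+1)/2` elements: the diagonal values give `w`, the off-diagonal
ones the entries of `A` above the diagonal.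
-/

/-- The skew-symmetric `d × d` matrix whose entry at `(i, j)` with `i < j` is `f s(i, j)`. -/
def skewEntry {d : ℕ} (f : Sym2 (Fin d) → ℝ) (i j : Fin d) : ℝ :=
  if i < j then f s(i, j) else if j < i then -f s(i, j) else 0

lemma skewEntry_swap {d : ℕ} (f : Sym2 (Fin d) → ℝ) (i j : Fin d) :
    skewEntry f j i = -skewEntry f i j := by
  unfold skewEntry
  rw [Sym2.eq_swap]
  rcases lt_trichotomy i j with h | h | h
  · simp [h, h.not_gt]
  · simp [h]
  · simp [h, h.not_gt]

/-- The rigid velocity `x ↦ w + A x` encoded by `f`: the vector `w` is the diagonal part of `f`,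
the skew-symmetric matrix `A` is `skewEntry f`. -/
noncomputable def rigidVelocity {d : ℕ} (f : Sym2 (Fin d) → ℝ) (x : EuclideanSpace ℝ (Fin d)) :
    EuclideanSpace ℝ (Fin d) :=
  WithLp.toLp 2 fun i => f s(i, i) + ∑ j, skewEntry f i j * x j

lemma rigidVelocity_apply {d : ℕ} (f : Sym2 (Fin d) → ℝ) (x : EuclideanSpace ℝ (Fin d))
    (i : Fin d) : rigidVelocity f x i = f s(i, i) + ∑ j, skewEntry f i j * x j := rfl

/-- Rigid velocities preserve distances to first order, by skew-symmetry. -/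
lemma inner_sub_rigidVelocity {d : ℕ} (f : Sym2 (Fin d) → ℝ) (x y : EuclideanSpace ℝ (Fin d)) :
    ⟪x - y, rigidVelocity f x - rigidVelocity f y⟫ = 0 := by
  have key : ∀ v : Fin d → ℝ, ∑ i, ∑ j, skewEntry f i j * v j * v i = 0 := by
    intro v
    have h : ∑ i, ∑ j, skewEntry f i j * v j * v i
        = -∑ i, ∑ j, skewEntry f i j * v j * v i := by
      conv_lhs => rw [Finset.sum_comm]
      simp only [← Finset.sum_neg_distrib]
      refine Finset.sum_congr rfl fun i _ => Finset.sum_congr rfl fun j _ => ?_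
      rw [skewEntry_swap]
      ring
    linarith
  rw [← key fun i => x i - y i, PiLp.inner_apply]
  refine Finset.sum_congr rfl fun i _ => ?_
  simp only [PiLp.sub_apply, rigidVelocity_apply, add_sub_add_left_eq_sub,
    ← Finset.sum_sub_distrib, ← mul_sub, ← Finset.sum_mul, RCLike.inner_apply, conj_trivial]

/-- A rigid velocity vanishing on an affinely spanning set has zero translation part and zero
skew-symmetric part. -/
lemma eq_zero_of_rigidVelocity {d : ℕ} (f : Sym2 (Fin d) → ℝ)
    (S : Set (EuclideanSpace ℝ (Fin d))) (hS : affineSpan ℝ S = ⊤)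
    (h : ∀ x ∈ S, rigidVelocity f x = 0) : f = 0 := by
  have hall : ∀ x, rigidVelocity f x = 0 := by
    intro x
    have hx : x ∈ affineSpan ℝ S := by rw [hS]; trivial
    refine affineSpan_induction hx h ?_
    · intro c u v w hu hv hw
      have hc : rigidVelocity f (c • (u -ᵥ v) +ᵥ w)
          = c • (rigidVelocity f u - rigidVelocity f v) + rigidVelocity f w := by
        ext i
        simp only [rigidVelocity_apply, vsub_eq_sub, vadd_eq_add, PiLp.add_apply, PiLp.smul_apply,
          PiLp.sub_apply, smul_eq_mul, mul_add, mul_sub, Finset.sum_add_distrib,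
          Finset.sum_sub_distrib, mul_left_comm _ c, ← Finset.mul_sum]
        ring
      rw [hc, hu, hv, hw]
      simp
  have hdiag : ∀ i, f s(i, i) = 0 := by
    intro i
    simpa [rigidVelocity_apply] using congrArg (fun v => v i) (hall 0)
  have hskew : ∀ i j, skewEntry f i j = 0 := by
    intro i j
    simpa [rigidVelocity_apply, hdiag] using
      congrArg (fun v => v i) (hall (EuclideanSpace.single j 1))
  funext z
  induction z using Sym2.ind with
  | _ i j =>
    have hij := hskew i j
    unfold skewEntry at hij
    rcases lt_trichotomy i j with h | h | h
    · simpa [h] using hij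
    · subst h; exact hdiag i
    · simpa [h, h.not_gt] using hij

/-- Maxwell's rule (equation (1) of the paper): with `m` the number of flexes
(dimension of the kernel of the rigidity map minus the `d(d+1)/2` rigid
velocities) and `s` the number of selfstresses (the corank `e - rank R` of the
rigidity matrix), one has `d·n - d(d+1)/2 - e = m - s`, with `m, s ≥ 0`. -/
theorem maxwell_rule
    (d n : ℕ) (p : Fin n → EuclideanSpace ℝ (Fin d))
    (hspan : affineSpan ℝ (Set.range p) = ⊤)
    (E : Finset (Sym2 (Fin n))) (hE : ∀ e ∈ E, ¬ e.IsDiag)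
    (ρ : (Fin n → EuclideanSpace ℝ (Fin d)) →ₗ[ℝ] (E → ℝ))
    (hρ : ∀ (q : Fin n → EuclideanSpace ℝ (Fin d)) (i j : Fin n)
      (h : s(i, j) ∈ E), ρ q ⟨s(i, j), h⟩ = ⟪p i - p j, q i - q j⟫) :
    ((d * n : ℤ) - d * (d + 1) / 2 - E.card =
        ((Module.finrank ℝ (LinearMap.ker ρ) : ℤ) - d * (d + 1) / 2) -
          ((E.card : ℤ) - Module.finrank ℝ (LinearMap.range ρ))) ∧
      d * (d + 1) / 2 ≤ Module.finrank ℝ (LinearMap.ker ρ) ∧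
      Module.finrank ℝ (LinearMap.range ρ) ≤ E.card := by
  refine ⟨?_, ?_, ?_⟩
  · have h := LinearMap.finrank_range_add_finrank_ker ρ
    rw [Module.finrank_pi_fintype] at h
    simp only [finrank_euclideanSpace, Fintype.card_fin, Finset.sum_const, Finset.card_univ,
      smul_eq_mul] at h
    have h' : (Module.finrank ℝ (LinearMap.range ρ) : ℤ) + Module.finrank ℝ (LinearMap.ker ρ)
        = n * d := by exact_mod_cast h
    linarith
  · let T : (Sym2 (Fin d) → ℝ) →ₗ[ℝ] (Fin n → EuclideanSpace ℝ (Fin d)) :=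
      { toFun := fun f k => rigidVelocity f (p k)
        map_add' := by
          intro f g
          ext k i
          have hs : ∀ j, skewEntry (f + g) i j = skewEntry f i j + skewEntry g i j := by
            intro j
            unfold skewEntry
            split_ifs <;> simp [add_comm]
          simp only [rigidVelocity_apply, Pi.add_apply, PiLp.add_apply, hs, add_mul,
            Finset.sum_add_distrib]
          ring
        map_smul' := by
          intro c f
          ext k i
          have hs : ∀ j, skewEntry (c • f) i j = c * skewEntry f i j := by
            intro j
            unfold skewEntry
            split_ifs <;> simp
          simp only [rigidVelocity_apply, Pi.smul_apply, PiLp.smul_apply, hs, mul_assoc,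
            smul_eq_mul, RingHom.id_apply, mul_add, Finset.mul_sum] }
    have hker : ∀ f, T f ∈ LinearMap.ker ρ := by
      intro f
      rw [LinearMap.mem_ker]
      funext ⟨e, he⟩
      induction e using Sym2.ind with
      | _ i j =>
        rw [hρ]
        exact inner_sub_rigidVelocity f (p i) (p j)
    have hinj : Function.Injective (T.codRestrict (LinearMap.ker ρ) hker) := by
      rw [← LinearMap.ker_eq_bot, LinearMap.ker_codRestrict, LinearMap.ker_eq_bot']
      intro f hf
      refine eq_zero_of_rigidVelocity f _ hspan ?_
      rintro _ ⟨k, rfl⟩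
      exact congrFun hf k
    have h := LinearMap.finrank_le_finrank_of_injective hinj
    rwa [Module.finrank_fintype_fun_eq_card, Sym2.card, Fintype.card_fin, Nat.choose_two_right,
      Nat.add_sub_cancel, mul_comm] at h
  · simpa using (LinearMap.range ρ).finrank_le
end

section
/- Let d ≥ 1 and n ≥ d + 2, let p : Fin n → EuclideanSpace ℝ (Fin d) be a generic configuration, i.e. the family of d·n real coordinates ((p i) j)_{i ∈ Fin n, j ∈ Fin d} is algebraically independent over ℚ, and let E : Finset (Sym2 (Fin n)) be a set of unordered pairs of distinct indices such that the framework (E, p) is universally rigid. Then E.card ≥ d·n − d(d+1)/2 + 1. (Lower bound on the number of edges of a generic universally rigid framework.) -/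
/-!
Let `f` send a configuration in `ℝ^d` to its squared edge lengths. Both halves of the bound
`E.card ≥ rank f'(p) + 1 ≥ d·n - d(d+1)/2 + 1` come from looking at the fibre of `f` over `f p`.

* `f'(p)` is not surjective (`not_surjective_fderiv`): otherwise `f` is open at `p`, and the nodes
  can be lifted slightly into `ℝ^(d+1)`, to heights proportional to a nonzero affine dependence of
  `p`, while `f` is corrected inside `ℝ^d`. The lifted framework has the same edge lengths but
  violates the affine dependence, contradicting universal rigidity.
* The kernel of `f'(p)` has dimension at most `d(d+1)/2`. By genericity `f'` has maximal rank at
  `p` (`rank_le_rank_of_generic`), so every kernel vector is the velocity of a curve in the fibre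
  (`fderiv_eq_zero_of_fiber`). All configurations on that curve are congruent to `p`, hence kernel
  vectors preserve all pairwise distances to first order, and such motions form a space of
  dimension at most `d(d+1)/2` (`finrank_flex_le`).
-/

/-! ### Maps of locally maximal rank -/

open Filter Topology in
/-- If the derivative of `f` has maximal rank at `p` and `g` is constant on the fibre of `f`
through `p`, then every direction killed by `f'(p)` is killed by `g'(p)`: by the constant rank
theorem the fibre is a manifold near `p` whose tangent space is the whole kernel of `f'(p)`. Only
the curve in the fibre with a prescribed velocity is needed, and it is produced from the inverse
function theorem. -/
theorem fderiv_eq_zero_of_fiber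
    {X Y : Type*} [NormedAddCommGroup X] [NormedSpace ℝ X] [FiniteDimensional ℝ X]
    [NormedAddCommGroup Y] [NormedSpace ℝ Y] [FiniteDimensional ℝ Y]
    {f : X → Y} (hf : ContDiff ℝ 1 f) {g : X → ℝ} (hg : Differentiable ℝ g) {p : X}
    (hrank : ∀ x, Module.finrank ℝ (LinearMap.range (fderiv ℝ f x).toLinearMap) ≤
      Module.finrank ℝ (LinearMap.range (fderiv ℝ f p).toLinearMap))
    (hfg : ∀ x, f x = f p → g x = g p) {v : X} (hv : fderiv ℝ f p v = 0) :
    fderiv ℝ g p v = 0 := by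
  have : CompleteSpace X := FiniteDimensional.complete ℝ X
  set V := LinearMap.range (fderiv ℝ f p).toLinearMap with hV
  set K := LinearMap.ker (fderiv ℝ f p).toLinearMap with hK
  obtain ⟨P0, hP0⟩ := LinearMap.exists_leftInverse_of_injective V.subtype (by simp)
  obtain ⟨Q0, hQ0⟩ := LinearMap.exists_leftInverse_of_injective K.subtype (by simp)
  let P : Y →L[ℝ] V := P0.toContinuousLinearMap
  let Q : X →L[ℝ] K := Q0.toContinuousLinearMap
  have hP : ∀ y : V, P (y : Y) = y := fun y => LinearMap.congr_fun hP0 y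
  have hQ : ∀ y : K, Q (y : X) = y := fun y => LinearMap.congr_fun hQ0 y
  -- `P` retracts onto the range of `f'(p)`, `Q` onto its kernel, so `F'(p)` is invertible.
  let F : X → V × K := fun x => (P (f x), Q x)
  have hF : ContDiff ℝ 1 F := (P.contDiff.comp hf).prodMk Q.contDiff
  have hfd : Differentiable ℝ f := hf.differentiable one_ne_zero
  let F' : X → (X →L[ℝ] V × K) := fun x => (P.comp (fderiv ℝ f x)).prod Q
  have hF' : ∀ x, HasFDerivAt F (F' x) x := fun x =>
    (P.hasFDerivAt.comp x (hfd x).hasFDerivAt).prodMk Q.hasFDerivAt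
  have hinj : Function.Injective (F' p).toLinearMap := by
    rw [← LinearMap.ker_eq_bot, LinearMap.ker_eq_bot']
    intro x hx
    have h1 : P (fderiv ℝ f p x) = 0 := congrArg Prod.fst hx
    have h2 : Q x = 0 := congrArg Prod.snd hx
    have h3 := hP ⟨fderiv ℝ f p x, x, rfl⟩
    have h4 : fderiv ℝ f p x = 0 := by
      simpa using congrArg Subtype.val (h3.symm.trans h1)
    have h5 := hQ ⟨x, h4⟩
    simpa using congrArg Subtype.val (h5.symm.trans h2)
  have hdim : Module.finrank ℝ X = Module.finrank ℝ (V × K) := by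
    rw [Module.finrank_prod, hV, hK, LinearMap.finrank_range_add_finrank_ker]
  let L : X ≃L[ℝ] V × K :=
    (LinearEquiv.ofInjectiveOfFinrankEq _ hinj hdim).toContinuousLinearEquiv
  have hL : (L : X →L[ℝ] V × K) = F' p := by
    ext1 x; rfl
  -- Near `p` the map `P ∘ f'(x)` still has rank `dim V`, which bounds the rank of `f'(x)`, so no
  -- further direction is killed by `P`.
  have hker : ∀ᶠ x in 𝓝 p, ∀ u, P (fderiv ℝ f x u) = 0 → fderiv ℝ f x u = 0 := by
    have hc : ContinuousAt F' p := by
      have h1 : Continuous (fderiv ℝ f) := hf.continuous_fderiv one_ne_zero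
      have h2 : Continuous F' := by
        have := (ContinuousLinearMap.compL ℝ X Y V P).continuous.comp h1
        exact (ContinuousLinearMap.prodₗᵢ (𝕜 := ℝ) (E := X) (F := V) (G := K) ℝ).continuous.comp
          (this.prodMk continuous_const)
      exact h2.continuousAt
    have h2 := hc.eventually (by rw [← hL]; exact L.nhds)
    filter_upwards [h2] with x hx u hu
    obtain ⟨M, hM⟩ := hx
    let T : LinearMap.range (fderiv ℝ f x).toLinearMap →ₗ[ℝ] V :=
      P.toLinearMap.comp (Submodule.subtype _)
    have hT : Function.Surjective T := by
      intro y
      obtain ⟨z, hz⟩ := M.surjective (y, 0)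
      have h3 : F' x z = (y, 0) := by rw [← hz, ← hM]; rfl
      exact ⟨⟨fderiv ℝ f x z, z, rfl⟩, congrArg Prod.fst h3⟩
    have hd : Module.finrank ℝ (LinearMap.range (fderiv ℝ f x).toLinearMap) =
        Module.finrank ℝ V :=
      le_antisymm (hrank x) (LinearMap.finrank_le_finrank_of_surjective hT)
    have hTi := (LinearMap.injective_iff_surjective_of_finrank_eq_finrank hd).2 hT
    have h6 : (⟨fderiv ℝ f x u, u, rfl⟩ : LinearMap.range (fderiv ℝ f x).toLinearMap) = 0 :=
      hTi (by rw [map_zero]; exact hu)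
    simpa using congrArg Subtype.val h6
  have hFs : HasStrictFDerivAt F (L : X →L[ℝ] V × K) p :=
    hF.contDiffAt.hasStrictFDerivAt' (by rw [hL]; exact hF' p) one_ne_zero
  let Φ := hF.contDiffAt.localInverse (a := p) (f' := L) (n := 1) (by rw [hL]; exact hF' p) one_ne_zero
  have hΦp : Φ (F p) = p := hFs.localInverse_apply_image
  have hΦc : ContDiffAt ℝ 1 Φ (F p) := ContDiffAt.to_localInverse _ _ _
  have hΦr : ∀ᶠ y in 𝓝 (F p), F (Φ y) = y := hFs.eventually_right_inverse
  let w : K := ⟨v, hv⟩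
  let c : ℝ → V × K := fun t => F p + t • (0, w)
  have hcd : ∀ t, HasDerivAt c (0, w) t := fun t => by
    have h := ((hasDerivAt_id t).smul_const ((0, w) : V × K)).const_add (F p)
    rwa [one_smul] at h
  have hc0 : c 0 = F p := by simp [c]
  have hct : Tendsto c (𝓝 0) (𝓝 (F p)) := by
    simpa [hc0] using (hcd 0).continuousAt.tendsto
  have hΦd : ∀ᶠ y in 𝓝 (F p), DifferentiableAt ℝ Φ y :=
    (hΦc.eventually (by simp)).mono fun y hy => hy.differentiableAt one_ne_zero
  have hΦt : Tendsto Φ (𝓝 (F p)) (𝓝 p) := by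
    simpa [hΦp] using hΦc.continuousAt.tendsto
  have hev := hct.eventually (hΦd.and (hΦr.eventually_nhds.and (hΦt.eventually hker)))
  obtain ⟨ε, hε, hball⟩ := Metric.eventually_nhds_iff_ball.1 hev
  -- The curve on which `P ∘ f` is frozen and `Q` moves with velocity `v`.
  let γ : ℝ → X := fun t => Φ (c t)
  have hγ0 : γ 0 = p := by simp only [γ, hc0, hΦp]
  have hγ : ∀ t ∈ Metric.ball (0 : ℝ) ε, ∃ u, HasDerivAt γ u t ∧ F' (γ t) u = (0, w) ∧
      fderiv ℝ f (γ t) u = 0 := by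
    intro t ht
    obtain ⟨h1, h2, h3⟩ := hball t ht
    have h4 : HasDerivAt γ (fderiv ℝ Φ (c t) (0, w)) t :=
      h1.hasFDerivAt.comp_hasDerivAt t (hcd t)
    have h5 : HasDerivAt (fun s => F (γ s)) (F' (γ t) (fderiv ℝ Φ (c t) (0, w))) t :=
      (hF' (γ t)).comp_hasDerivAt t h4
    have h6 : HasDerivAt (fun s => F (γ s)) (0, w) t :=
      (hcd t).congr_of_eventuallyEq ((hcd t).continuousAt.eventually h2)
    have h7 := h5.unique h6
    exact ⟨_, h4, h7, h3 _ (congrArg Prod.fst h7)⟩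
  have hconst : ∀ t ∈ Metric.ball (0 : ℝ) ε, f (γ t) = f p := by
    intro t ht
    have hd : ∀ s ∈ Metric.ball (0 : ℝ) ε, HasDerivAt (fun s => f (γ s)) 0 s := by
      intro s hs
      obtain ⟨u, h1, -, h3⟩ := hγ s hs
      have := (hfd (γ s)).hasFDerivAt.comp_hasDerivAt s h1
      rwa [h3] at this
    have := Metric.isOpen_ball.is_const_of_deriv_eq_zero
      (convex_ball (0 : ℝ) ε).isPreconnected
      (fun s hs => (hd s hs).differentiableAt.differentiableWithinAt)
      (fun s hs => (hd s hs).deriv) ht (Metric.mem_ball_self hε)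
    simpa only [hγ0] using this
  obtain ⟨u, h1, h2, h3⟩ := hγ 0 (Metric.mem_ball_self hε)
  rw [hγ0] at h2 h3
  have huv : u = v := by
    have h4 : Q u = w := congrArg Prod.snd h2
    have h5 := hQ ⟨u, h3⟩
    simpa [w] using congrArg Subtype.val (h5.symm.trans h4)
  have h4 : HasDerivAt (fun s => g (γ s)) (fderiv ℝ g p v) 0 := by
    have := (hg (γ 0)).hasFDerivAt.comp_hasDerivAt 0 h1
    rwa [hγ0, huv] at this
  have h5 : HasDerivAt (fun s => g (γ s)) 0 0 :=
    (hasDerivAt_const (0 : ℝ) (g p)).congr_of_eventuallyEq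
      (by filter_upwards [Metric.ball_mem_nhds (0 : ℝ) hε] with t ht using hfg _ (hconst t ht))
  exact h4.unique h5

/-! ### Generic points -/

theorem aeval_ne_zero_of_generic {τ : Type*} {p : τ → ℝ} (hp : AlgebraicIndependent ℚ p)
    (x : τ → ℝ) {D : MvPolynomial τ ℚ} (h : MvPolynomial.aeval x D ≠ 0) :
    MvPolynomial.aeval p D ≠ 0 := by
  intro h0
  rw [hp.eq_zero_of_aeval_eq_zero _ h0, map_zero] at h
  exact h rfl

/-- A matrix of rational polynomials attains its maximal real rank at a generic point. A maximal
independent set of rows at `x` is detected by the nonvanishing of its Gram determinant, which is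
again a rational polynomial. -/
theorem rank_le_rank_of_generic {ι σ τ : Type*} [Fintype ι] [Fintype σ]
    {p : τ → ℝ} (hp : AlgebraicIndependent ℚ p) (M : Matrix ι σ (MvPolynomial τ ℚ))
    (x : τ → ℝ) :
    (M.map (MvPolynomial.aeval x)).rank ≤ (M.map (MvPolynomial.aeval p)).rank := by
  classical
  obtain ⟨κ, a, ha, hspan, hli⟩ :=
    exists_linearIndependent' ℝ (M.map (MvPolynomial.aeval x)).row
  have : Fintype κ := Fintype.ofInjective a ha
  let N : Matrix κ σ (MvPolynomial τ ℚ) := M.submatrix a id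
  have hmap : ∀ y : τ → ℝ, MvPolynomial.aeval y (N * N.transpose).det =
      (N.map (MvPolynomial.aeval y) * (N.map (MvPolynomial.aeval y)).transpose).det := by
    intro y
    rw [AlgHom.map_det, AlgHom.mapMatrix_apply, Matrix.map_mul, Matrix.transpose_map]
  have hNx : (N.map (MvPolynomial.aeval x)).rank = Fintype.card κ := by
    apply LinearIndependent.rank_matrix
    exact hli
  have hx : MvPolynomial.aeval x (N * N.transpose).det ≠ 0 := by
    rw [hmap, ← isUnit_iff_ne_zero, ← Matrix.isUnit_iff_isUnit_det,
      ← Matrix.linearIndependent_rows_iff_isUnit, linearIndependent_iff_card_eq_finrank_span,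
      Set.finrank, ← Matrix.rank_eq_finrank_span_row, Matrix.rank_self_mul_transpose, hNx]
  have hp' := aeval_ne_zero_of_generic hp x hx
  rw [hmap, ← isUnit_iff_ne_zero, ← Matrix.isUnit_iff_isUnit_det] at hp'
  have h1 := Matrix.rank_of_isUnit _ hp'
  rw [Matrix.rank_self_mul_transpose] at h1
  calc (M.map (MvPolynomial.aeval x)).rank = Fintype.card κ := by
        rw [Matrix.rank_eq_finrank_span_row, ← hspan]
        exact (linearIndependent_iff_card_eq_finrank_span.1 hli).symm
    _ = (N.map (MvPolynomial.aeval p)).rank := h1.symm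
    _ ≤ _ := by
        rw [Matrix.rank_eq_finrank_span_row, Matrix.rank_eq_finrank_span_row]
        apply Submodule.finrank_mono
        apply Submodule.span_mono
        rintro _ ⟨i, rfl⟩
        exact ⟨a i, rfl⟩

/-! ### The rigidity map -/

/-- The squared distance of nodes `i` and `j` in the configuration with coordinates `x (i, k)`. -/
def sqDist {n d : ℕ} (i j : Fin n) (x : Fin n × Fin d → ℝ) : ℝ :=
  ∑ k, (x (i, k) - x (j, k)) ^ 2

theorem sqDist_comm {n d : ℕ} (i j : Fin n) (x : Fin n × Fin d → ℝ) :
    sqDist i j x = sqDist j i x :=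
  Finset.sum_congr rfl fun _ _ => by ring

theorem contDiff_sqDist {n d : ℕ} (i j : Fin n) :
    ContDiff ℝ 1 (sqDist (d := d) i j) := by
  unfold sqDist
  fun_prop

theorem fderiv_sqDist {n d : ℕ} (i j : Fin n) (x v : Fin n × Fin d → ℝ) :
    fderiv ℝ (sqDist i j) x v =
      ∑ k, 2 * (x (i, k) - x (j, k)) * (v (i, k) - v (j, k)) := by
  have h : HasFDerivAt (sqDist (d := d) i j)
      (∑ k, (2 * (x (i, k) - x (j, k))) •
        (ContinuousLinearMap.proj (R := ℝ) (φ := fun _ : Fin n × Fin d => ℝ) (i, k) -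
          ContinuousLinearMap.proj (j, k))) x := by
    unfold sqDist
    refine HasFDerivAt.fun_sum fun k _ => ?_
    have := ((hasFDerivAt_apply (𝕜 := ℝ) (i, k) x).sub (hasFDerivAt_apply (𝕜 := ℝ) (j, k) x)).pow 2
    simpa using this
  rw [h.fderiv]
  simp

/-- The Jacobian matrix of the squared edge lengths, with entries that are rational polynomials in
the coordinates. The edges are indexed by `ι`, the edge `e` joining the nodes `a e` and `b e`. -/
noncomputable def rigidityMatrix {n : ℕ} (d : ℕ) {ι : Type*} (a b : ι → Fin n) :
    Matrix ι (Fin n × Fin d) (MvPolynomial (Fin n × Fin d) ℚ) :=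
  fun e mk => 2 * (MvPolynomial.X (a e, mk.2) - MvPolynomial.X (b e, mk.2)) *
    ((if mk.1 = a e then 1 else 0) - if mk.1 = b e then 1 else 0)

/-- The squared edge lengths of a configuration, for the edges `{a e, b e}`. -/
def edgeMap {n : ℕ} (d : ℕ) {ι : Type*} (a b : ι → Fin n) (x : Fin n × Fin d → ℝ) : ι → ℝ :=
  fun e => sqDist (a e) (b e) x

theorem contDiff_edgeMap {n d : ℕ} {ι : Type*} [Fintype ι] (a b : ι → Fin n) :
    ContDiff ℝ 1 (edgeMap d a b) :=
  contDiff_pi.2 fun _ => contDiff_sqDist _ _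

theorem fderiv_edgeMap_apply {n d : ℕ} {ι : Type*} [Fintype ι] (a b : ι → Fin n)
    (x v : Fin n × Fin d → ℝ) (e : ι) :
    fderiv ℝ (edgeMap d a b) x v e = fderiv ℝ (sqDist (a e) (b e)) x v := by
  unfold edgeMap
  rw [fderiv_pi fun e => (contDiff_sqDist (a e) (b e)).differentiable one_ne_zero x]
  rfl

theorem fderiv_edgeMap {n d : ℕ} {ι : Type*} [Fintype ι] (a b : ι → Fin n)
    (x : Fin n × Fin d → ℝ) :
    (fderiv ℝ (edgeMap d a b) x).toLinearMap =
      ((rigidityMatrix d a b).map (MvPolynomial.aeval x)).mulVecLin := by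
  refine LinearMap.ext fun v => funext fun e => ?_
  have h : (∑ k, 2 * (x (a e, k) - x (b e, k)) * (v (a e, k) - v (b e, k))) =
      ∑ m, ∑ k, 2 * (x (a e, k) - x (b e, k)) *
        ((if m = a e then 1 else 0) - if m = b e then 1 else 0) * v (m, k) := by
    rw [Finset.sum_comm]
    refine Finset.sum_congr rfl fun k _ => ?_
    simp [mul_sub, sub_mul, Finset.sum_sub_distrib]
  have h2 := (fderiv_edgeMap_apply a b x v e).trans ((fderiv_sqDist _ _ x v).trans h)
  refine h2.trans ?_
  simp only [Matrix.mulVecLin_apply, Matrix.mulVec, dotProduct, Fintype.sum_prod_type]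
  refine Finset.sum_congr rfl fun m _ => Finset.sum_congr rfl fun k _ => ?_
  congr 1
  simp only [rigidityMatrix, Matrix.map_apply, map_mul, map_sub, MvPolynomial.aeval_X,
    apply_ite (MvPolynomial.aeval x), map_one, map_zero, map_ofNat]

/-! ### The two rank estimates -/

/-- A space `T` of infinitesimal motions of a generic configuration that preserve all pairwise
distances has dimension at most `d(d+1)/2`. Such a motion `v` is determined by the velocity of node
`o` together with the matrix of products `⟨p_a - p_o, v_b - v_o⟩` over `d` further nodes, and this
matrix is antisymmetric; the velocity of `o` is recorded on the diagonal of the index set. -/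
theorem finrank_flex_le {n d : ℕ} (hn : d + 1 ≤ n) {p : Fin n × Fin d → ℝ}
    (hp : AlgebraicIndependent ℚ p) (T : Submodule ℝ (Fin n × Fin d → ℝ))
    (hT : ∀ v ∈ T, ∀ i j, ∑ k, 2 * (p (i, k) - p (j, k)) * (v (i, k) - v (j, k)) = 0) :
    Module.finrank ℝ T ≤ d * (d + 1) / 2 := by
  let o : Fin n := ⟨0, by omega⟩
  let s : Fin d → Fin n := fun a => ⟨a + 1, by omega⟩
  have hT' : ∀ v ∈ T, ∀ i j, ∑ k, (p (i, k) - p (j, k)) * (v (i, k) - v (j, k)) = 0 := by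
    intro v hv i j
    have := hT v hv i j
    simp only [mul_assoc, ← Finset.mul_sum] at this
    linarith
  -- The edge vectors at `o` are independent: their determinant is a polynomial that equals `1` when
  -- `o` is the origin and the other nodes are the standard basis vectors.
  let B : Matrix (Fin d) (Fin d) ℝ := fun a k => p (s a, k) - p (o, k)
  have hB : B.det ≠ 0 := by
    let BP : Matrix (Fin d) (Fin d) (MvPolynomial (Fin n × Fin d) ℚ) :=
      Matrix.of fun a k => MvPolynomial.X (s a, k) - MvPolynomial.X (o, k)
    have hBP : ∀ y : Fin n × Fin d → ℝ, MvPolynomial.aeval y BP.det =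
        (Matrix.of fun a k => y (s a, k) - y (o, k)).det := by
      intro y
      rw [AlgHom.map_det]
      congr 1
      ext a k
      simp [BP]
    have h := aeval_ne_zero_of_generic hp
      (fun mk => if (mk.1 : ℕ) = mk.2 + 1 then 1 else 0) (D := BP.det) ?_
    · rwa [hBP] at h
    · rw [hBP]
      have h1 : (Matrix.of fun a k : Fin d => (if (s a : ℕ) = (k : ℕ) + 1 then (1 : ℝ) else 0) -
          if (o : ℕ) = (k : ℕ) + 1 then 1 else 0) = 1 := by
        ext a k
        simp [s, o, Matrix.one_apply, Fin.ext_iff]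
      simp only [h1, Matrix.det_one]
      exact one_ne_zero
  have hBinj : ∀ u : Fin d → ℝ, (∀ a, ∑ k, B a k * u k = 0) → u = 0 := by
    intro u hu
    exact Matrix.eq_zero_of_mulVec_eq_zero hB (funext hu)
  let Ψ : (Fin n × Fin d → ℝ) →ₗ[ℝ] ({ab : Fin d × Fin d // ab.1 ≤ ab.2} → ℝ) :=
    { toFun := fun v ab => if ab.1.1 = ab.1.2 then v (o, ab.1.1) else
        ∑ k, B ab.1.1 k * (v (s ab.1.2, k) - v (o, k))
      map_add' := by
        intro v w
        funext ab
        simp only [Pi.add_apply]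
        split_ifs
        · rfl
        · rw [← Finset.sum_add_distrib]
          exact Finset.sum_congr rfl fun _ _ => by ring
      map_smul' := by
        intro c v
        funext ab
        simp only [Pi.smul_apply, smul_eq_mul, RingHom.id_apply]
        split_ifs
        · rfl
        · rw [Finset.mul_sum]
          exact Finset.sum_congr rfl fun _ _ => by ring }
  have hinj : Function.Injective (Ψ.comp T.subtype) := by
    rw [← LinearMap.ker_eq_bot, LinearMap.ker_eq_bot']
    rintro ⟨v, hv⟩ hΨ
    have hΨ' : ∀ a b, a ≤ b → (if a = b then v (o, a) else
        ∑ k, B a k * (v (s b, k) - v (o, k))) = 0 := fun a b hab => congrFun hΨ ⟨(a, b), hab⟩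
    have hvo : ∀ k, v (o, k) = 0 := fun k => by simpa using hΨ' k k le_rfl
    have hlt : ∀ a b, a < b → ∑ k, B a k * v (s b, k) = 0 := by
      intro a b hab
      simpa [hab.ne, hvo] using hΨ' a b hab.le
    have hdiag : ∀ a, ∑ k, B a k * v (s a, k) = 0 := by
      intro a
      simpa [hvo] using hT' v hv (s a) o
    have hanti : ∀ a b, ∑ k, B a k * v (s b, k) + ∑ k, B b k * v (s a, k) = 0 := by
      intro a b
      have h := hT' v hv (s a) (s b)
      have h2 : ∑ k, (p (s a, k) - p (s b, k)) * (v (s a, k) - v (s b, k)) =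
          ∑ k, B a k * v (s a, k) + ∑ k, B b k * v (s b, k) -
            (∑ k, B a k * v (s b, k) + ∑ k, B b k * v (s a, k)) := by
        rw [← Finset.sum_add_distrib, ← Finset.sum_add_distrib, ← Finset.sum_sub_distrib]
        exact Finset.sum_congr rfl fun _ _ => by simp only [B]; ring
      rw [h2, hdiag, hdiag] at h
      linarith
    have hall : ∀ a b, ∑ k, B a k * v (s b, k) = 0 := by
      intro a b
      rcases lt_trichotomy a b with h | h | h
      · exact hlt a b h
      · rw [h]; exact hdiag b
      · have := hanti a b
        rw [hlt b a h] at this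
        linarith
    have hvs : ∀ b k, v (s b, k) = 0 := fun b k =>
      congrFun (hBinj (fun k => v (s b, k)) fun a => hall a b) k
    have hvi : ∀ i k, v (i, k) = 0 := by
      intro i k
      refine congrFun (hBinj (fun k => v (i, k)) fun a => ?_) k
      have h1 := hT' v hv i (s a)
      have h2 := hT' v hv i o
      simp only [hvs, hvo, sub_zero] at h1 h2
      rw [← sub_eq_zero.2 (h2.trans h1.symm), ← Finset.sum_sub_distrib]
      exact Finset.sum_congr rfl fun _ _ => by simp only [B]; ring
    ext ⟨i, k⟩
    exact hvi i k
  have h := LinearMap.finrank_le_finrank_of_injective hinj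
  rw [Module.finrank_fintype_fun_eq_card, ← Fintype.card_congr (Sym2.sortEquiv (α := Fin d)),
    Sym2.card, Fintype.card_fin, Nat.choose_two_right] at h
  simpa [mul_comm] using h

open Filter Topology in
/-- If all configurations in `ℝ^(d+1)` with the edge lengths of `p` are congruent to `p`, then the
rigidity map is not a submersion at `p`, i.e. `p` carries a nonzero equilibrium stress. At a
submersion, any small change of edge lengths caused by lifting the nodes out of `ℝ^d` could be
compensated inside `ℝ^d`; lifting along an affine dependence of the nodes destroys that
dependence, so the result is not congruent to `p`. -/
theorem not_surjective_fderiv {n d : ℕ} (hn : d + 2 ≤ n) {ι : Type*} [Fintype ι]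
    (a b : ι → Fin n) {p : Fin n × Fin d → ℝ}
    (hur : ∀ y : Fin n × Fin (d + 1) → ℝ, edgeMap (d + 1) a b y = edgeMap d a b p →
      ∀ i j, sqDist i j y = sqDist i j p) :
    LinearMap.range (fderiv ℝ (edgeMap d a b) p).toLinearMap ≠ ⊤ := by
  intro hsurj
  let A : (Fin n → ℝ) →ₗ[ℝ] (Fin d → ℝ) × ℝ :=
    { toFun := fun l => (fun k => ∑ i, l i * p (i, k), ∑ i, l i)
      map_add' := fun l m => by
        ext <;> simp [add_mul, Finset.sum_add_distrib]
      map_smul' := fun c l => by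
        ext <;> simp [mul_assoc, Finset.mul_sum] }
  obtain ⟨lam, hlam, hne⟩ := Submodule.exists_mem_ne_zero_of_ne_bot
    (LinearMap.ker_ne_bot_of_finrank_lt (f := A) (by simp; omega))
  have hl1 : ∀ k, ∑ i, lam i * p (i, k) = 0 := fun k => congrFun (congrArg Prod.fst hlam) k
  have hl2 : ∑ i, lam i = 0 := congrArg Prod.snd hlam
  -- `c t` are the squared lengths needed in `ℝ^d` when node `i` is lifted to height `t * lam i`.
  have hmap := ((contDiff_edgeMap (d := d) a b).contDiffAt.hasStrictFDerivAt
    (x := p) one_ne_zero).map_nhds_eq_of_surj hsurj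
  let c : ℝ → ι → ℝ := fun t e => edgeMap d a b p e - (t * (lam (a e) - lam (b e))) ^ 2
  have hc : Tendsto c (𝓝[≠] 0) (𝓝 (edgeMap d a b p)) := by
    have h : Continuous c := by fun_prop
    have h2 := (h.tendsto 0).mono_left (nhdsWithin_le_nhds (s := {0}ᶜ))
    have h0 : c 0 = edgeMap d a b p := by funext e; simp [c]
    rwa [h0] at h2
  have hev : ∀ᶠ z in 𝓝 (edgeMap d a b p), ∃ x, edgeMap d a b x = z := by
    rw [← hmap, eventually_map]
    exact Eventually.of_forall fun x => ⟨x, rfl⟩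
  obtain ⟨t, ⟨x, hx⟩, ht⟩ := ((hc.eventually hev).and self_mem_nhdsWithin).exists
  let y : Fin n × Fin (d + 1) → ℝ := fun mk =>
    Fin.cons (α := fun _ => ℝ) (t * lam mk.1) (fun k => x (mk.1, k)) mk.2
  have hy : ∀ i j, sqDist i j y = (t * (lam i - lam j)) ^ 2 + sqDist i j x := by
    intro i j
    simp only [sqDist, Fin.sum_univ_succ, y, Fin.cons_zero, Fin.cons_succ]
    ring
  have hcong := hur y (by
    funext e
    have := congrFun hx e
    simp only [c, edgeMap] at this ⊢
    rw [hy, this]; ring)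
  -- The norm of `∑ lam i • z i` depends only on the pairwise distances, as `∑ lam i = 0`.
  have key : ∀ {D : ℕ} (z : Fin n × Fin D → ℝ), ∑ k, (∑ i, lam i * z (i, k)) ^ 2 =
      -(∑ i, ∑ j, lam i * lam j * sqDist i j z) / 2 := by
    intro D z
    have h1 : ∀ k, (∑ i, lam i * z (i, k)) ^ 2 =
        -(∑ i, ∑ j, lam i * lam j * (z (i, k) - z (j, k)) ^ 2) / 2 := by
      intro k
      have h2 : ∑ i, ∑ j, lam i * lam j * (z (i, k) - z (j, k)) ^ 2 =
          (∑ i, lam i * z (i, k) ^ 2) * (∑ j, lam j) + (∑ i, lam i) * (∑ j, lam j * z (j, k) ^ 2)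
            - 2 * ((∑ i, lam i * z (i, k)) * (∑ j, lam j * z (j, k))) := by
        rw [Finset.sum_mul_sum, Finset.sum_mul_sum, Finset.sum_mul_sum, Finset.mul_sum,
          ← Finset.sum_add_distrib, ← Finset.sum_sub_distrib]
        refine Finset.sum_congr rfl fun _ _ => ?_
        rw [Finset.mul_sum, ← Finset.sum_add_distrib, ← Finset.sum_sub_distrib]
        exact Finset.sum_congr rfl fun _ _ => by ring
      rw [h2, hl2]; ring
    simp only [h1, sqDist, ← Finset.sum_div, Finset.sum_neg_distrib, Finset.mul_sum]
    congr 2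
    rw [Finset.sum_comm]
    exact Finset.sum_congr rfl fun _ _ => Finset.sum_comm
  have hz : ∑ k, (∑ i, lam i * y (i, k)) ^ 2 = 0 := by
    rw [key y]
    simp only [hcong]
    rw [← key p]
    simp [hl1]
  have h0 := (Finset.sum_eq_zero_iff_of_nonneg (fun k _ => sq_nonneg _)).1 hz 0 (Finset.mem_univ _)
  have h1 : t * ∑ i, lam i ^ 2 = 0 := by
    rw [Finset.mul_sum, ← pow_eq_zero_iff two_ne_zero |>.1 h0]
    exact Finset.sum_congr rfl fun _ _ => by simp only [y, Fin.cons_zero]; ring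
  have h2 := (mul_eq_zero.1 h1).resolve_left ht
  refine hne (funext fun i => ?_)
  simpa using (Finset.sum_eq_zero_iff_of_nonneg (fun k _ => sq_nonneg _)).1 h2 i (Finset.mem_univ _)

/-- Lower bound on the number of edges of a generic universally rigid
framework: if `p` is a generic configuration of `n ≥ d + 2` nodes in `d ≥ 1`
dimensions and the framework `(E, p)` is universally rigid, then
`E.card ≥ d·n - d(d+1)/2 + 1`. -/
theorem generic_universally_rigid_edge_lower_bound
    (d n : ℕ) (hd : 1 ≤ d) (hn : d + 2 ≤ n)
    (p : Fin n → EuclideanSpace ℝ (Fin d))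
    (hgen : AlgebraicIndependent ℚ (fun ij : Fin n × Fin d => p ij.1 ij.2))
    (E : Finset (Sym2 (Fin n))) (hE : ∀ e ∈ E, ¬ e.IsDiag)
    (hur : ∀ (D : ℕ) (q : Fin n → EuclideanSpace ℝ (Fin D)),
      (∀ i j : Fin n, s(i, j) ∈ E → ‖q i - q j‖ = ‖p i - p j‖) →
      ∀ i j : Fin n, ‖q i - q j‖ = ‖p i - p j‖) :
    d * n - d * (d + 1) / 2 + 1 ≤ E.card := by
  let P : Fin n × Fin d → ℝ := fun ij => p ij.1 ij.2
  have hex : ∀ e : E, ∃ i j, s(i, j) = e.1 := fun e =>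
    Sym2.ind (f := fun e => ∃ i j, s(i, j) = e) (fun i j => ⟨i, j, rfl⟩) e.1
  choose a b hab using hex
  have hnorm : ∀ {D : ℕ} (z w : EuclideanSpace ℝ (Fin D)),
      ‖z - w‖ ^ 2 = ∑ k, (z k - w k) ^ 2 := fun z w => EuclideanSpace.real_norm_sq_eq (z - w)
  have hcong : ∀ (D : ℕ) (y : Fin n × Fin D → ℝ), edgeMap D a b y = edgeMap d a b P →
      ∀ i j, sqDist i j y = sqDist i j P := by
    intro D y hy i j
    let q : Fin n → EuclideanSpace ℝ (Fin D) := fun i => WithLp.toLp 2 fun k => y (i, k)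
    have hq : ∀ i j, ‖q i - q j‖ ^ 2 = sqDist i j y := fun i j => hnorm _ _
    have hp : ∀ i j, ‖p i - p j‖ ^ 2 = sqDist i j P := fun i j => hnorm _ _
    rw [← hq, ← hp, hur D q _ i j]
    intro i j hij
    rw [← sq_eq_sq₀ (norm_nonneg _) (norm_nonneg _), hq, hp]
    have h1 : sqDist (a ⟨_, hij⟩) (b ⟨_, hij⟩) y = sqDist (a ⟨_, hij⟩) (b ⟨_, hij⟩) P :=
      congrFun hy ⟨_, hij⟩
    rcases Sym2.eq_iff.1 (hab ⟨_, hij⟩) with ⟨h2, h3⟩ | ⟨h2, h3⟩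
    · rwa [h2, h3] at h1
    · rwa [h2, h3, sqDist_comm j i, sqDist_comm j i] at h1
  let f' := (fderiv ℝ (edgeMap d a b) P).toLinearMap
  have hker : Module.finrank ℝ (LinearMap.ker f') ≤ d * (d + 1) / 2 := by
    refine finrank_flex_le (by omega) hgen _ fun v hv i j => ?_
    rw [← fderiv_sqDist i j P v]
    refine fderiv_eq_zero_of_fiber (contDiff_edgeMap a b)
      ((contDiff_sqDist i j).differentiable one_ne_zero) (fun x => ?_)
      (fun x hx => hcong d x hx i j) hv
    rw [fderiv_edgeMap, fderiv_edgeMap]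
    exact rank_le_rank_of_generic hgen _ x
  have hran : Module.finrank ℝ (LinearMap.range f') < E.card := by
    have h := Submodule.finrank_lt (not_surjective_fderiv hn a b (p := P) (hcong (d + 1)))
    simpa using h
  have hsum := f'.finrank_range_add_finrank_ker
  have hdim : Module.finrank ℝ (Fin n × Fin d → ℝ) = d * n := by simp [mul_comm]
  omega
end
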